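/- arXiv:1109.2225 — 2 statements merged into one kernel-verified Lean document; each statement's English description precedes it below -/
import Mathlib

section
/- There exists a computable sequence P : ℕ → ℕ × List (List (ℕ × Bool)) of codes of finite group presentations such that, writing G_i for the group presented by P i: (1) the commensurability problem is solvable within the class, i.e. there is a computable function d : ℕ × ℕ → Bool with d (i, j) = true if and only if G_i and G_j are commensurable; and (2) the isomorphism problem is unsolvable within the class, i.e. there is no computable function e : ℕ × ℕ → Bool with e (i, j) = true if and only if G_i and G_j are isomorphic. -/
/-!
The groups are built from machines with finitely many affine rules `r + m u ↦ c + a u` on vectors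
of natural numbers (modular machines), which simulate Mathlib's stack Turing machines for partial
recursive functions: `exists_machine`. For a machine and an input `n`, consider the group with
generators `a, b, f, k, t`, commuting `x₀, …, x₄`, one generator `s` for each rule, and
`z₁, …, z_n`, where `a`, `b` and the `z_j` are central and `b² = 1`. The conjugate of `t` by `x ^ α`
codes the configuration `α`; the relations of `s` say that conjugation by `s` carries out the rule;
`k` commutes with each `s` and with the code of the halting configuration, whereas its commutator
with the code of the starting configuration `g n` is `b`. The group comes in three versions:
`a² = b` (version `0`), `a² = 1` (version `1`) and `a = 1` (version `2`).

*The element `b` decides halting.* If the machine halts on `n`, then the code of the start is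
conjugate to the code of the halting configuration by a product of the generators `s`, so it
commutes with `k`, and `b = 1` (`Sat.b_eq_one`). If it does not halt, then the configurations that
reach the halting one form a set that is invariant under the rules and omits the start
(`exists_invariant`), and from this set one builds permutations satisfying the relations with
`b ≠ 1` (`exists_sat`).

*Isomorphism.* If `b = 1`, versions `0` and `1` have the same relations
(`IsPres.nonempty_equiv`). If `b ≠ 1`, they are not isomorphic (`IsPres.not_equiv`): as the factor
generated by `f` is free, the elements of finite order that centralize a subgroup of finite index
are the products of powers of `a` and `b`, and only in version `0` is there one of order `4`.

*Commensurability.* Version `2` embeds as a subgroup of index at most `2` in versions `0` and `1`,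
so these are always commensurable (`IsPres.commensurable`). Conversely, the elements centralizing a
subgroup of finite index form the subgroup generated by `a`, `b` and the `z_j`
(`IsPres.mem_cenSub`); its rank is `n`, and it is a commensurability invariant
(`IsPres.eq_of_commensurable`).

Hence, for the sequence `P` in which `P (2 n)` and `P (2 n + 1)` are the versions `0` and `1` for
the input `n`, the groups of `P i` and `P j` are commensurable if and only if `i / 2 = j / 2`, while
an algorithm deciding isomorphism of `P (2 n)` and `P (2 n + 1)` would solve the halting problem.
-/

/-- The element of `FreeGroup (Fin n)` represented by a coded word: an entry `(i, b)`
denotes the `(i % n)`-th generator if `b = true` and its inverse if `b = false`. -/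
def wordToFree (n : ℕ) (w : List (ℕ × Bool)) : FreeGroup (Fin n) :=
  (w.map fun p =>
    if h : 0 < n then
      (if p.2 then FreeGroup.of (⟨p.1 % n, Nat.mod_lt _ h⟩ : Fin n)
       else (FreeGroup.of (⟨p.1 % n, Nat.mod_lt _ h⟩ : Fin n))⁻¹)
    else 1).prod

/-- The set of relators of the finite presentation coded by `c`. -/
def codeRels (c : ℕ × List (List (ℕ × Bool))) : Set (FreeGroup (Fin c.1)) :=
  {g | ∃ w ∈ c.2, g = wordToFree c.1 w}

/-- The group presented by the code `c`: the quotient of `FreeGroup (Fin c.1)` by the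
normal closure of the relators. -/
abbrev codeGroup (c : ℕ × List (List (ℕ × Bool))) : Type :=
  PresentedGroup (codeRels c)

/-- Two groups are commensurable if they have isomorphic subgroups of finite index. -/
def GroupCommensurable (G : Type*) (H : Type*) [Group G] [Group H] : Prop :=
  ∃ (K₁ : Subgroup G) (K₂ : Subgroup H), K₁.index ≠ 0 ∧ K₂.index ≠ 0 ∧ Nonempty (K₁ ≃* K₂)

/-! ### Evaluating words and presenting equations -/

namespace CommIsom

/-- The value of a coded word when the `i`-th generator is sent to `h i`. -/
def ev {P : Type} [Group P] (h : ℕ → P) (w : List (ℕ × Bool)) : P :=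
  (w.map fun p => if p.2 then h p.1 else (h p.1)⁻¹).prod

/-- The formal inverse of a coded word. -/
def winv (w : List (ℕ × Bool)) : List (ℕ × Bool) :=
  (w.map fun p => (p.1, !p.2)).reverse

/-- The word of the `e`-th power of the `j`-th generator. -/
def wpow (j e : ℕ) : List (ℕ × Bool) := List.replicate e (j, true)

section ev
variable {P : Type} [Group P] (h : ℕ → P)

@[simp] lemma ev_nil : ev h [] = 1 := by simp [ev]

@[simp] lemma ev_append (u v : List (ℕ × Bool)) : ev h (u ++ v) = ev h u * ev h v := by
  simp [ev]

lemma ev_cons (p : ℕ × Bool) (v : List (ℕ × Bool)) :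
    ev h (p :: v) = (if p.2 then h p.1 else (h p.1)⁻¹) * ev h v := by
  simp [ev]

@[simp] lemma ev_winv (w : List (ℕ × Bool)) : ev h (winv w) = (ev h w)⁻¹ := by
  induction w with
  | nil => simp [winv]
  | cons p w ih =>
    have : winv (p :: w) = winv w ++ [(p.1, !p.2)] := by simp [winv]
    rw [this, ev_append, ih, ev_cons, ev_cons]
    rcases p with ⟨i, b⟩
    cases b <;> simp

@[simp] lemma ev_wpow (j e : ℕ) : ev h (wpow j e) = h j ^ e := by
  simp [ev, wpow]

lemma ev_congr {h h' : ℕ → P} (w : List (ℕ × Bool)) (H : ∀ p ∈ w, h p.1 = h' p.1) :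
    ev h w = ev h' w := by
  unfold ev
  congr 1
  apply List.map_congr_left
  intro p hp
  rw [H p hp]

lemma ev_map {Q : Type} [Group Q] (φ : P →* Q) (w : List (ℕ × Bool)) :
    φ (ev h w) = ev (fun i => φ (h i)) w := by
  unfold ev
  rw [map_list_prod, List.map_map]
  congr 1
  apply List.map_congr_left
  intro p _
  cases hp : p.2 <;> simp [hp]

end ev

/-- The `i`-th generator (indices read modulo the number of generators) of the group presented
by a code. -/
def cgen (c : ℕ × List (List (ℕ × Bool))) (hc : 0 < c.1) (i : ℕ) : codeGroup c :=
  PresentedGroup.of ⟨i % c.1, Nat.mod_lt _ hc⟩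

lemma mk_wordToFree (c : ℕ × List (List (ℕ × Bool))) (hc : 0 < c.1) (w : List (ℕ × Bool)) :
    PresentedGroup.mk (codeRels c) (wordToFree c.1 w) = ev (cgen c hc) w := by
  unfold wordToFree ev
  rw [map_list_prod, List.map_map]
  congr 1
  apply List.map_congr_left
  intro p _
  cases hp : p.2 <;> simp [hp, hc, cgen, PresentedGroup.of]

lemma ev_cgen (c : ℕ × List (List (ℕ × Bool))) (hc : 0 < c.1) {w : List (ℕ × Bool)}
    (hw : w ∈ c.2) : ev (cgen c hc) w = 1 := by
  rw [← mk_wordToFree]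
  exact PresentedGroup.one_of_mem ⟨w, hw, rfl⟩

/-- The universal property of the group presented by a code. -/
lemma exists_lift (c : ℕ × List (List (ℕ × Bool))) (hc : 0 < c.1) {P : Type} [Group P]
    (h : ℕ → P) (H : ∀ w ∈ c.2, ev (fun i => h (i % c.1)) w = 1) :
    ∃ φ : codeGroup c →* P, ∀ i, φ (cgen c hc i) = h (i % c.1) := by
  have key : ∀ w, FreeGroup.lift (fun i : Fin c.1 => h i) (wordToFree c.1 w)
      = ev (fun i => h (i % c.1)) w := by
    intro w
    unfold wordToFree ev
    rw [map_list_prod, List.map_map]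
    congr 1
    apply List.map_congr_left
    intro p _
    cases hp : p.2 <;> simp [hp, hc]
  refine ⟨PresentedGroup.toGroup (f := fun i : Fin c.1 => h i) ?_, fun i => ?_⟩
  · rintro r ⟨w, hw, rfl⟩
    rw [key, H w hw]
  · simp [cgen]

lemma closure_cgen (c : ℕ × List (List (ℕ × Bool))) (hc : 0 < c.1) :
    Subgroup.closure {g | ∃ i < c.1, g = cgen c hc i} = ⊤ := by
  rw [eq_top_iff, ← PresentedGroup.closure_range_of (codeRels c)]
  apply Subgroup.closure_mono
  rintro _ ⟨i, rfl⟩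
  exact ⟨i, i.2, by simp [cgen, Nat.mod_eq_of_lt i.2]⟩

end CommIsom

/-! ### The presentations -/

namespace CommIsom

/-- An affine rule on vectors of natural numbers: it rewrites `r + m * u` to `c + a * u`
(coordinatewise), for every vector `u`. -/
structure Rule where
  m : Fin 5 → ℕ
  a : Fin 5 → ℕ
  r : Fin 5 → ℕ
  c : Fin 5 → ℕ
  hm : ∀ j, 0 < m j
  ha : ∀ j, 0 < a j

/-- A modular machine: finitely many affine rules, a halting vector `g0`, and the vector `g n`
that codes the start of the computation on input `n`. -/
structure Machine where
  rules : List Rule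
  g0 : Fin 5 → ℕ
  g : ℕ → Fin 5 → ℕ

/-- The number of generators of the `n`-th presentations. -/
def Machine.N (D : Machine) (n : ℕ) : ℕ := 10 + D.rules.length + n

section sat
variable {P : Type} [Group P]

/-- The product `x₀ ^ r₀ ⋯ x₄ ^ r₄`, where `x_j = h (5 + j)`. -/
def xw (h : ℕ → P) (r : Fin 5 → ℕ) : P :=
  h 5 ^ r 0 * h 6 ^ r 1 * h 7 ^ r 2 * h 8 ^ r 3 * h 9 ^ r 4

/-- The conjugate of `t = h 4` by `x ^ r`; it codes the configuration `r` of the machine. -/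
def tc (h : ℕ → P) (r : Fin 5 → ℕ) : P := (xw h r)⁻¹ * h 4 * xw h r

/-- The indices of the generators that are declared central: `a` (index `0`), `b` (index `1`)
and the `n` generators `z_j`. -/
def Machine.Cen (D : Machine) (n i : ℕ) : Prop :=
  i = 0 ∨ i = 1 ∨ (10 + D.rules.length ≤ i ∧ i < D.N n)

/-- The defining equations of the `n`-th groups. The generators are `a = h 0`, `b = h 1`,
`f = h 2` (free), `k = h 3`, `t = h 4`, `x_j = h (5 + j)`, `s_i = h (10 + i)` for each rule, and
`n` further central generators. The parameter `v` selects one of three versions, in which `a` is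
a square root of `b`, an involution, or trivial. -/
structure Sat (D : Machine) (n v : ℕ) (h : ℕ → P) : Prop where
  cen : ∀ i, D.Cen n i → ∀ y < D.N n, h i * h y = h y * h i
  b2 : h 1 * h 1 = 1
  v0 : v = 0 → h 0 * h 0 = h 1
  v1 : v = 1 → h 0 * h 0 = 1
  v2 : v = 2 → h 0 = 1
  xx : ∀ i j : Fin 5, h (5 + i) * h (5 + j) = h (5 + j) * h (5 + i)
  sx : ∀ (i : Fin D.rules.length) (j : Fin 5),
    h (10 + i) * h (5 + j) ^ (D.rules[i].m j) = h (5 + j) ^ (D.rules[i].a j) * h (10 + i)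
  st : ∀ i : Fin D.rules.length,
    h (10 + i) * tc h D.rules[i].r = tc h D.rules[i].c * h (10 + i)
  ks : ∀ i : Fin D.rules.length, h 3 * h (10 + i) = h (10 + i) * h 3
  k0 : h 3 * tc h D.g0 = tc h D.g0 * h 3
  kg : h 3 * tc h (D.g n) = h 1 * (tc h (D.g n) * h 3)

lemma xw_congr {h h' : ℕ → P} (H : ∀ i, 5 ≤ i → i < 10 → h i = h' i) (r) : xw h r = xw h' r := by
  unfold xw
  rw [H 5, H 6, H 7, H 8, H 9] <;> norm_num

lemma tc_congr {h h' : ℕ → P} (H : ∀ i, 4 ≤ i → i < 10 → h i = h' i) (r) : tc h r = tc h' r := by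
  unfold tc
  rw [xw_congr (h' := h') (fun i hi hi' => H i (by omega) hi'), H 4] <;> norm_num

lemma Sat.congr {D : Machine} {n v : ℕ} {h h' : ℕ → P} (S : Sat D n v h)
    (H : ∀ i < D.N n, h i = h' i) : Sat D n v h' := by
  have hN : 10 + D.rules.length ≤ D.N n := by unfold Machine.N; omega
  have T : ∀ r, tc h r = tc h' r := tc_congr (fun i _ hi => H i (by omega))
  have X : ∀ i : Fin 5, h (5 + i) = h' (5 + i) := fun i => H _ (by omega)
  have Y : ∀ i : Fin D.rules.length, h (10 + i) = h' (10 + i) := fun i => H _ (by omega)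
  refine ⟨fun i hi y hy => ?_, ?_, ?_, ?_, ?_, fun i j => ?_, fun i j => ?_, fun i => ?_,
    fun i => ?_, ?_, ?_⟩
  · rw [← H y hy, ← H i (by unfold Machine.Cen at hi; omega)]
    exact S.cen i hi y hy
  · rw [← H 1 (by omega)]; exact S.b2
  · rw [← H 1 (by omega), ← H 0 (by omega)]; exact S.v0
  · rw [← H 0 (by omega)]; exact S.v1
  · rw [← H 0 (by omega)]; exact S.v2
  · rw [← X, ← X]; exact S.xx i j
  · rw [← X, ← Y]; exact S.sx i j
  · rw [← T, ← T, ← Y]; exact S.st i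
  · rw [← Y, ← H 3 (by omega)]; exact S.ks i
  · rw [← T, ← H 3 (by omega)]; exact S.k0
  · rw [← T, ← H 3 (by omega), ← H 1 (by omega)]; exact S.kg

lemma map_xw {Q : Type} [Group Q] (φ : P →* Q) (h : ℕ → P) (r) :
    φ (xw h r) = xw (fun i => φ (h i)) r := by simp [xw]

lemma map_tc {Q : Type} [Group Q] (φ : P →* Q) (h : ℕ → P) (r) :
    φ (tc h r) = tc (fun i => φ (h i)) r := by simp [tc, map_xw]

lemma Sat.map {Q : Type} [Group Q] {D : Machine} {n v : ℕ} {h : ℕ → P} (S : Sat D n v h)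
    (φ : P →* Q) : Sat D n v (fun i => φ (h i)) := by
  refine ⟨fun i hi y hy => ?_, ?_, ?_, ?_, ?_, fun i j => ?_, fun i j => ?_, fun i => ?_,
    fun i => ?_, ?_, ?_⟩
  · simpa using congrArg φ (S.cen i hi y hy)
  · simpa using congrArg φ S.b2
  · intro e; simpa using congrArg φ (S.v0 e)
  · intro e; simpa using congrArg φ (S.v1 e)
  · intro e; simpa using congrArg φ (S.v2 e)
  · simpa using congrArg φ (S.xx i j)
  · simpa using congrArg φ (S.sx i j)
  · simpa [map_tc] using congrArg φ (S.st i)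
  · simpa using congrArg φ (S.ks i)
  · simpa [map_tc] using congrArg φ S.k0
  · simpa [map_tc] using congrArg φ S.kg

end sat

/-- `G` with the generators `h i`, `i < D.N n`, is presented by the equations `Sat D n v`. -/
structure IsPres (D : Machine) (n v : ℕ) (G : Type) [Group G] (h : ℕ → G) : Prop where
  sat : Sat D n v h
  univ : ∀ (P : Type) [Group P] (h' : ℕ → P), Sat D n v h' →
    ∃ φ : G →* P, ∀ i < D.N n, φ (h i) = h' i
  gen : Subgroup.closure {g | ∃ i < D.N n, g = h i} = ⊤

/-- The relator of the equation `u = w` between words. -/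
def eqw (u w : List (ℕ × Bool)) : List (ℕ × Bool) := u ++ winv w

/-- The word of `x ^ r`. -/
def xww (r : Fin 5 → ℕ) : List (ℕ × Bool) :=
  wpow 5 (r 0) ++ wpow 6 (r 1) ++ wpow 7 (r 2) ++ wpow 8 (r 3) ++ wpow 9 (r 4)

/-- The word of the conjugate of `t` by `x ^ r`. -/
def tcw (r : Fin 5 → ℕ) : List (ℕ × Bool) := winv (xww r) ++ wpow 4 1 ++ xww r

/-- The commutation relator of two generators. -/
def comw (i j : ℕ) : List (ℕ × Bool) := eqw (wpow i 1 ++ wpow j 1) (wpow j 1 ++ wpow i 1)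

/-- The relators that do not depend on `n` and `v`. -/
def relFixed (D : Machine) : List (List (ℕ × Bool)) :=
  [wpow 1 2, eqw (wpow 3 1 ++ tcw D.g0) (tcw D.g0 ++ wpow 3 1)] ++
  ((List.finRange 5).flatMap fun (i : Fin 5) => (List.finRange 5).map fun (j : Fin 5) =>
    comw (5 + i) (5 + j)) ++
  ((List.finRange D.rules.length).flatMap fun (i : Fin D.rules.length) =>
    (List.finRange 5).map fun (j : Fin 5) =>
    eqw (wpow (10 + i) 1 ++ wpow (5 + j) (D.rules[i].m j))
      (wpow (5 + j) (D.rules[i].a j) ++ wpow (10 + i) 1)) ++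
  ((List.finRange D.rules.length).map fun (i : Fin D.rules.length) =>
    eqw (wpow (10 + i) 1 ++ tcw D.rules[i].r) (tcw D.rules[i].c ++ wpow (10 + i) 1)) ++
  ((List.finRange D.rules.length).map fun (i : Fin D.rules.length) => comw 3 (10 + i))

/-- The relator that distinguishes the versions. -/
def relV (v : ℕ) : List (ℕ × Bool) :=
  if v = 0 then eqw (wpow 0 2) (wpow 1 1) else if v = 1 then wpow 0 2 else wpow 0 1

/-- The relators that make `b = [k, t^(x^(g n))]`. -/
def relG (g : Fin 5 → ℕ) : List (ℕ × Bool) :=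
  eqw (wpow 3 1 ++ tcw g) (wpow 1 1 ++ (tcw g ++ wpow 3 1))

/-- The relators making the generator `i` commute with the first `N` generators. -/
def relC (N i : ℕ) : List (List (ℕ × Bool)) := (List.range N).map fun y => comw i y

/-- The code of the `n`-th group in version `v`. -/
def pcode (D : Machine) (n v : ℕ) : ℕ × List (List (ℕ × Bool)) :=
  (D.N n, relFixed D ++ ([relV v, relG (D.g n)] ++ (relC (D.N n) 0 ++ (relC (D.N n) 1 ++
    ((List.range n).flatMap fun j => relC (D.N n) (10 + D.rules.length + j))))))

section
variable {P : Type} [Group P] (h : ℕ → P)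

lemma ev_eqw (u w : List (ℕ × Bool)) : ev h (eqw u w) = 1 ↔ ev h u = ev h w := by
  simp [eqw, mul_inv_eq_one]

lemma ev_xww (r) : ev h (xww r) = xw h r := by simp [xww, xw, mul_assoc]

lemma ev_tcw (r) : ev h (tcw r) = tc h r := by simp [tcw, tc, ev_xww, mul_assoc]

lemma ev_comw (i j : ℕ) : ev h (comw i j) = 1 ↔ h i * h j = h j * h i := by
  simp [comw, ev_eqw]

lemma ev_relC (N i : ℕ) : (∀ w ∈ relC N i, ev h w = 1) ↔ ∀ y < N, h i * h y = h y * h i := by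
  simp [relC, ev_comw]

lemma ev_relFixed (D : Machine) : (∀ w ∈ relFixed D, ev h w = 1) ↔
    (h 1 * h 1 = 1 ∧ h 3 * tc h D.g0 = tc h D.g0 * h 3) ∧
    (∀ i j : Fin 5, h (5 + i) * h (5 + j) = h (5 + j) * h (5 + i)) ∧
    (∀ (i : Fin D.rules.length) (j : Fin 5),
    h (10 + i) * h (5 + j) ^ (D.rules[i].m j) = h (5 + j) ^ (D.rules[i].a j) * h (10 + i)) ∧
    (∀ i : Fin D.rules.length,
    h (10 + i) * tc h D.rules[i].r = tc h D.rules[i].c * h (10 + i)) ∧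
    (∀ i : Fin D.rules.length, h 3 * h (10 + i) = h (10 + i) * h 3) := by
  unfold relFixed
  simp only [List.forall_mem_append, List.forall_mem_cons, List.forall_mem_flatMap,
    List.forall_mem_map, List.mem_finRange, forall_true_left, ev_comw, ev_eqw, ev_append,
    ev_wpow, ev_tcw, pow_one, pow_two, List.not_mem_nil, IsEmpty.forall_iff, implies_true, and_true]
  tauto

lemma ev_pcode (D : Machine) (n v : ℕ) (hv : v ≤ 2) :
    (∀ w ∈ (pcode D n v).2, ev h w = 1) ↔ Sat D n v h := by
  have hV : ev h (relV v) = 1 ↔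
      (v = 0 → h 0 * h 0 = h 1) ∧ (v = 1 → h 0 * h 0 = 1) ∧ (v = 2 → h 0 = 1) := by
    interval_cases v <;> simp [relV, ev_eqw, pow_two]
  have hG : ev h (relG (D.g n)) = 1 ↔ h 3 * tc h (D.g n) = h 1 * (tc h (D.g n) * h 3) := by
    simp [relG, ev_eqw, ev_tcw]
  unfold pcode
  simp only [List.forall_mem_append, List.forall_mem_cons, List.forall_mem_flatMap, hV, hG,
    ev_relFixed, ev_relC, List.mem_range, List.not_mem_nil, IsEmpty.forall_iff, implies_true,
    and_true]
  constructor
  · rintro ⟨⟨⟨h1, h2⟩, h3, h4, h5, h6⟩, ⟨⟨h7, h8, h9⟩, h10⟩, h11, h12, h13⟩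
    refine ⟨?_, h1, h7, h8, h9, h3, h4, h5, h6, h2, h10⟩
    rintro i (rfl | rfl | ⟨hi, hi'⟩)
    · exact h11
    · exact h12
    · have := h13 (i - (10 + D.rules.length)) (by unfold Machine.N at hi'; omega)
      rwa [Nat.add_sub_cancel' hi] at this
  · intro S
    exact ⟨⟨⟨S.b2, S.k0⟩, S.xx, S.sx, S.st, S.ks⟩, ⟨⟨S.v0, S.v1, S.v2⟩, S.kg⟩,
      S.cen 0 (Or.inl rfl), S.cen 1 (Or.inr (Or.inl rfl)),
      fun j hj => S.cen _ (Or.inr (Or.inr ⟨by omega, by unfold Machine.N; omega⟩))⟩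

end

lemma pcode_pos (D : Machine) (n v : ℕ) : 0 < (pcode D n v).1 := by
  simp [pcode, Machine.N]

/-- The group presented by `pcode D n v` is presented by the equations `Sat D n v`. -/
lemma isPres_pcode (D : Machine) (n v : ℕ) (hv : v ≤ 2) :
    IsPres D n v (codeGroup (pcode D n v)) (cgen (pcode D n v) (pcode_pos D n v)) := by
  refine ⟨(ev_pcode _ D n v hv).1 fun w hw => ev_cgen _ _ hw, ?_, closure_cgen _ _⟩
  intro P _ h' S
  have S' : Sat D n v (fun i => h' (i % D.N n)) :=
    S.congr fun i hi => by rw [Nat.mod_eq_of_lt hi]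
  obtain ⟨φ, hφ⟩ := exists_lift (pcode D n v) (pcode_pos D n v) h'
    ((ev_pcode _ D n v hv).2 S')
  refine ⟨φ, fun i hi => ?_⟩
  rw [hφ]
  exact congrArg h' (Nat.mod_eq_of_lt hi)

end CommIsom

/-! ### Consequences of the equations -/

namespace CommIsom

/-- One step of the machine. -/
def Machine.Step (D : Machine) (α β : Fin 5 → ℕ) : Prop :=
  ∃ (i : Fin D.rules.length) (u : Fin 5 → ℕ),
    α = D.rules[i].r + D.rules[i].m * u ∧ β = D.rules[i].c + D.rules[i].a * u

section
variable {P : Type} [Group P] {D : Machine} {n v : ℕ} {h : ℕ → P}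

lemma Sat.xw_add (S : Sat D n v h) (r s : Fin 5 → ℕ) : xw h (r + s) = xw h r * xw h s := by
  have C : ∀ i j : Fin 5, ∀ p q : ℕ, Commute (h (5 + i) ^ p) (h (5 + j) ^ q) :=
    fun i j p q => Commute.pow_pow (S.xx i j) p q
  have a1 : Commute (h 6 ^ r 1) (h 5 ^ s 0) := C 1 0 _ _
  have a2 : Commute (h 7 ^ r 2) (h 5 ^ s 0 * h 6 ^ s 1) := (C 2 0 _ _).mul_right (C 2 1 _ _)
  have a3 : Commute (h 8 ^ r 3) (h 5 ^ s 0 * h 6 ^ s 1 * h 7 ^ s 2) :=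
    ((C 3 0 _ _).mul_right (C 3 1 _ _)).mul_right (C 3 2 _ _)
  have a4 : Commute (h 9 ^ r 4) (h 5 ^ s 0 * h 6 ^ s 1 * h 7 ^ s 2 * h 8 ^ s 3) :=
    (((C 4 0 _ _).mul_right (C 4 1 _ _)).mul_right (C 4 2 _ _)).mul_right (C 4 3 _ _)
  unfold xw
  rw [a4.mul_mul_mul_comm, a3.mul_mul_mul_comm, a2.mul_mul_mul_comm, a1.mul_mul_mul_comm]
  simp [pow_add]

lemma Sat.s_xw (S : Sat D n v h) (i : Fin D.rules.length) (u : Fin 5 → ℕ) :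
    h (10 + i) * xw h (D.rules[i].m * u) = xw h (D.rules[i].a * u) * h (10 + i) := by
  have key : ∀ j : Fin 5, SemiconjBy (h (10 + i)) (h (5 + j) ^ ((D.rules[i].m * u) j))
      (h (5 + j) ^ ((D.rules[i].a * u) j)) := by
    intro j
    simp only [Pi.mul_apply, pow_mul]
    exact SemiconjBy.pow_right (S.sx i j) _
  unfold xw
  exact ((((key 0).mul_right (key 1)).mul_right (key 2)).mul_right (key 3)).mul_right (key 4)

/-- Conjugation by `s_i` carries out the `i`-th rule on the codes of configurations. -/
lemma Sat.tc_step (S : Sat D n v h) (i : Fin D.rules.length) (u : Fin 5 → ℕ) :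
    h (10 + i) * tc h (D.rules[i].r + D.rules[i].m * u) =
      tc h (D.rules[i].c + D.rules[i].a * u) * h (10 + i) := by
  have e : ∀ r w : Fin 5 → ℕ, tc h (r + w) = (xw h w)⁻¹ * tc h r * xw h w := by
    intro r w
    unfold tc
    rw [S.xw_add]
    group
  rw [e, e]
  have h1 : SemiconjBy (h (10 + i)) _ _ := S.s_xw i u
  have h2 : SemiconjBy (h (10 + i)) _ _ := S.st i
  exact (h1.inv_right.mul_right h2).mul_right h1

/-- The configurations whose codes commute with `k` are closed under predecessors, because `k`
commutes with the generators `s_i`. -/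
lemma Sat.comm_of_step (S : Sat D n v h) {α β} (st : D.Step α β) (hβ : Commute (h 3) (tc h β)) :
    Commute (h 3) (tc h α) := by
  obtain ⟨i, u, rfl, rfl⟩ := st
  have e := S.tc_step i u
  have e' : tc h (D.rules[i].r + D.rules[i].m * u) =
      (h (10 + i))⁻¹ * tc h (D.rules[i].c + D.rules[i].a * u) * h (10 + i) := by
    rw [mul_assoc, ← e]; group
  rw [e']
  have hs : Commute (h 3) (h (10 + i)) := S.ks i
  exact (hs.inv_right.mul_right hβ).mul_right hs

/-- If the machine runs from `g n` to the halting vector, then `b` is trivial: the conjugate of `t`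
coded by `g n` lies in the subgroup generated by the elements with which `k` commutes. -/
lemma Sat.b_eq_one (S : Sat D n v h) (H : Relation.ReflTransGen D.Step (D.g n) D.g0) :
    h 1 = 1 := by
  have : ∀ α, Relation.ReflTransGen D.Step α D.g0 → Commute (h 3) (tc h α) := by
    intro α H
    induction H using Relation.ReflTransGen.head_induction_on with
    | refl => exact S.k0
    | head h1 _ ih => exact S.comm_of_step h1 ih
  have e := S.kg
  rw [(this _ H).eq] at e
  exact (mul_eq_right.1 e.symm)

lemma Sat.to_v {v' : ℕ} (S : Sat D n v h) (hb : h 1 = 1) (h0 : v' = 0 ∨ v' = 1)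
    (h1 : v = 0 ∨ v = 1) : Sat D n v' h := by
  have : h 0 * h 0 = 1 := by
    rcases h1 with rfl | rfl
    · rw [S.v0 rfl, hb]
    · exact S.v1 rfl
  exact ⟨S.cen, S.b2, fun _ => by rw [this, hb], fun _ => this, fun e => by omega, S.xx, S.sx,
    S.st, S.ks, S.k0, S.kg⟩

/-- The equations do not restrict the value of `f = h 2` beyond commutation with the central
generators. -/
lemma Sat.update2 (S : Sat D n v h) (y : P)
    (hy : ∀ i, D.Cen n i → Commute (h i) y) : Sat D n v (Function.update h 2 y) := by
  have T : ∀ r, tc (Function.update h 2 y) r = tc h r :=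
    tc_congr (fun i hi _ => Function.update_of_ne (by omega) _ _)
  have X : ∀ i : ℕ, Function.update h 2 y (5 + i) = h (5 + i) :=
    fun i => Function.update_of_ne (by omega) _ _
  have Y : ∀ i : ℕ, Function.update h 2 y (10 + i) = h (10 + i) :=
    fun i => Function.update_of_ne (by omega) _ _
  have e0 : Function.update h 2 y 0 = h 0 := Function.update_of_ne (by omega) _ _
  have e1 : Function.update h 2 y 1 = h 1 := Function.update_of_ne (by omega) _ _
  have e3 : Function.update h 2 y 3 = h 3 := Function.update_of_ne (by omega) _ _
  refine ⟨fun i hi z hz => ?_, ?_, ?_, ?_, ?_, fun i j => ?_, fun i j => ?_, fun i => ?_,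
    fun i => ?_, ?_, ?_⟩
  · have : Function.update h 2 y i = h i := Function.update_of_ne
      (by unfold Machine.Cen at hi; omega) _ _
    rw [this]
    by_cases hz2 : z = 2
    · subst hz2
      rw [Function.update_self]
      exact hy i hi
    · rw [Function.update_of_ne hz2]
      exact S.cen i hi z hz
  · rw [e1]; exact S.b2
  · rw [e1, e0]; exact S.v0
  · rw [e0]; exact S.v1
  · rw [e0]; exact S.v2
  · rw [X, X]; exact S.xx i j
  · rw [X, Y]; exact S.sx i j
  · rw [T, T, Y]; exact S.st i
  · rw [Y, e3]; exact S.ks i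
  · rw [T, e3]; exact S.k0
  · rw [T, e3, e1]; exact S.kg

/-- Changing the value of `a = h 0` to another central element passes between the versions. -/
lemma Sat.update0 {v' : ℕ} (S : Sat D n v h) (y : P)
    (hy : ∀ i < D.N n, i ≠ 0 → Commute y (h i))
    (h0 : v' = 0 → y * y = h 1) (h1 : v' = 1 → y * y = 1) (h2 : v' = 2 → y = 1) :
    Sat D n v' (Function.update h 0 y) := by
  have T : ∀ r, tc (Function.update h 0 y) r = tc h r :=
    tc_congr (fun i hi _ => Function.update_of_ne (by omega) _ _)
  have X : ∀ i : ℕ, Function.update h 0 y (5 + i) = h (5 + i) :=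
    fun i => Function.update_of_ne (by omega) _ _
  have Y : ∀ i : ℕ, Function.update h 0 y (10 + i) = h (10 + i) :=
    fun i => Function.update_of_ne (by omega) _ _
  have e0 : Function.update h 0 y 0 = y := Function.update_self _ _ _
  have e1 : Function.update h 0 y 1 = h 1 := Function.update_of_ne (by omega) _ _
  have e3 : Function.update h 0 y 3 = h 3 := Function.update_of_ne (by omega) _ _
  refine ⟨fun i hi z hz => ?_, ?_, ?_, ?_, ?_, fun i j => ?_, fun i j => ?_, fun i => ?_,
    fun i => ?_, ?_, ?_⟩
  · by_cases hz2 : z = 0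
    · subst hz2
      by_cases hi0 : i = 0
      · rw [hi0]
      · rw [e0, Function.update_of_ne hi0]
        exact (hy i (by unfold Machine.Cen Machine.N at *; omega) hi0).symm
    · rw [Function.update_of_ne hz2]
      by_cases hi0 : i = 0
      · rw [hi0, e0]
        exact hy z hz hz2
      · rw [Function.update_of_ne hi0]
        exact S.cen i hi z hz
  · rw [e1]; exact S.b2
  · rw [e1, e0]; exact h0
  · rw [e0]; exact h1
  · rw [e0]; exact h2
  · rw [X, X]; exact S.xx i j
  · rw [X, Y]; exact S.sx i j
  · rw [T, T, Y]; exact S.st i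
  · rw [Y, e3]; exact S.ks i
  · rw [T, e3]; exact S.k0
  · rw [T, e3, e1]; exact S.kg

end

section
variable {D : Machine} {n v : ℕ} {G : Type} [Group G] {h : ℕ → G}

lemma IsPres.hom_ext (I : IsPres D n v G h) {P : Type} [Group P] {φ ψ : G →* P}
    (H : ∀ i < D.N n, φ (h i) = ψ (h i)) : φ = ψ := by
  refine MonoidHom.eq_of_eqOn_dense I.gen ?_
  rintro _ ⟨i, hi, rfl⟩
  exact H i hi

lemma IsPres.induction (I : IsPres D n v G h) (K : Subgroup G) (H : ∀ i < D.N n, h i ∈ K) (g : G) :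
    g ∈ K := by
  have : (⊤ : Subgroup G) ≤ K := by
    rw [← I.gen, Subgroup.closure_le]
    rintro _ ⟨i, hi, rfl⟩
    exact H i hi
  exact this trivial

lemma IsPres.cen_mem (I : IsPres D n v G h) {i : ℕ} (hi : D.Cen n i) :
    h i ∈ Subgroup.center G := by
  rw [Subgroup.mem_center_iff]
  intro g
  have := I.induction (Subgroup.centralizer {h i}) (fun y hy => by
    rw [Subgroup.mem_centralizer_singleton_iff]
    exact I.sat.cen i hi y hy |>.symm) g
  exact (Subgroup.mem_centralizer_singleton_iff.1 this)

lemma Machine.Cen.lt {D : Machine} {n i : ℕ} (hi : D.Cen n i) : i < D.N n := by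
  unfold Machine.Cen Machine.N at *; omega

/-- Two groups presented by the equations of the versions `v` and `v'` are isomorphic if each
set of equations implies the other. -/
lemma IsPres.equiv {v' : ℕ} {G' : Type} [Group G'] {h' : ℕ → G'} (I : IsPres D n v G h)
    (I' : IsPres D n v' G' h') (S : Sat D n v' h) (S' : Sat D n v h') : Nonempty (G ≃* G') := by
  obtain ⟨φ, hφ⟩ := I.univ G' h' S'
  obtain ⟨ψ, hψ⟩ := I'.univ G h S
  refine ⟨MonoidHom.toMulEquiv φ ψ (I.hom_ext fun i hi => ?_) (I'.hom_ext fun i hi => ?_)⟩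
  · simp [hφ i hi, hψ i hi]
  · simp [hφ i hi, hψ i hi]

/-- If the machine halts, then `b` is trivial, so the versions `0` and `1` coincide. -/
lemma IsPres.nonempty_equiv {G' : Type} [Group G'] {h' : ℕ → G'} (I : IsPres D n 0 G h)
    (I' : IsPres D n 1 G' h') (H : Relation.ReflTransGen D.Step (D.g n) D.g0) :
    Nonempty (G ≃* G') :=
  I.equiv I' (I.sat.to_v (I.sat.b_eq_one H) (Or.inr rfl) (Or.inl rfl))
    (I'.sat.to_v (I'.sat.b_eq_one H) (Or.inl rfl) (Or.inr rfl))

/-- The homomorphism to `ℤⁿ` that reads off the exponents of the generators `z_j`. -/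
lemma IsPres.exists_pi (I : IsPres D n v G h) :
    ∃ π : G →* Multiplicative (Fin n → ℤ),
      (∀ i, i < 10 + D.rules.length → π (h i) = 1) ∧
      ∀ j : Fin n, π (h (10 + D.rules.length + j)) = Multiplicative.ofAdd (Pi.single j 1) := by
  let h' : ℕ → Multiplicative (Fin n → ℤ) := fun i =>
    if H : 10 + D.rules.length ≤ i ∧ i < D.N n then
      Multiplicative.ofAdd (Pi.single ⟨i - (10 + D.rules.length), by
        unfold Machine.N at H; omega⟩ 1)
    else 1
  have e : ∀ i, i < 10 + D.rules.length → h' i = 1 := fun i hi => dif_neg (by omega)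
  have T : ∀ r, tc h' r = 1 := fun r => by
    unfold tc; rw [e 4 (by omega)]; group
  have S : Sat D n v h' := by
    refine ⟨fun i hi z hz => mul_comm _ _, ?_, ?_, ?_, ?_, fun i j => mul_comm _ _, fun i j => ?_,
      fun i => ?_, fun i => mul_comm _ _, mul_comm _ _, ?_⟩
    · rw [e 1 (by omega), mul_one]
    · rw [e 1 (by omega), e 0 (by omega), mul_one]; simp
    · rw [e 0 (by omega), mul_one]; simp
    · rw [e 0 (by omega)]; simp
    · rw [e _ (by omega), e _ (by omega)]; simp
    · rw [T, T, e _ (by omega)]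
    · rw [T, e 1 (by omega), e 3 (by omega)]; rfl
  obtain ⟨π, hπ⟩ := I.univ _ h' S
  refine ⟨π, fun i hi => ?_, fun j => ?_⟩
  · rw [hπ i (by unfold Machine.N; omega), e i hi]
  · rw [hπ _ (by unfold Machine.N; omega)]
    simp only [h']
    rw [dif_pos ⟨by omega, by unfold Machine.N; omega⟩]
    congr
    simp

/-- The subgroup generated by the central generators. -/
def cenSub (D : Machine) (n : ℕ) (h : ℕ → G) : Subgroup G :=
  Subgroup.closure {g | ∃ i, D.Cen n i ∧ g = h i}

lemma IsPres.cenSub_le (I : IsPres D n v G h) : cenSub D n h ≤ Subgroup.center G := by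
  unfold cenSub
  rw [Subgroup.closure_le]
  rintro _ ⟨i, hi, rfl⟩
  exact I.cen_mem hi

open scoped IsMulCommutative in
/-- A power of an element of `cenSub` with trivial image in `ℤⁿ` is trivial, the torsion coming
from `a` and `b` only. -/
lemma IsPres.pow_eq_one (I : IsPres D n v G h) {e : ℕ} (he0 : h 0 ^ e = 1) (he1 : h 1 ^ e = 1)
    (π : G →* Multiplicative (Fin n → ℤ))
    (hπ0 : ∀ i, i < 10 + D.rules.length → π (h i) = 1)
    (hπ : ∀ j : Fin n, π (h (10 + D.rules.length + j)) = Multiplicative.ofAdd (Pi.single j 1))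
    {g : G} (hg : g ∈ cenSub D n h) (hπg : π g = 1) : g ^ e = 1 := by
  classical
  -- the inverse direction: a homomorphism from `ℤⁿ` to the centre sending `e_j` to `z_j`
  let ζ : Fin n → Subgroup.center G := fun j =>
    ⟨h (10 + D.rules.length + j), I.cen_mem (Or.inr (Or.inr ⟨by omega, by
      unfold Machine.N; omega⟩))⟩
  let σ : Multiplicative (Fin n → ℤ) →* Subgroup.center G :=
    { toFun := fun w => ∏ j, ζ j ^ (Multiplicative.toAdd w j)
      map_one' := by simp
      map_mul' := fun w w' => by simp [zpow_add, Finset.prod_mul_distrib] }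
  have key : g ∈ Subgroup.center G ∧ g ^ e = (σ (π g) : G) ^ e := by
    clear hπg
    induction hg using Subgroup.closure_induction with
    | mem x hx =>
      obtain ⟨i, hi, rfl⟩ := hx
      refine ⟨I.cen_mem hi, ?_⟩
      rcases hi with rfl | rfl | ⟨hi, hi'⟩
      · rw [hπ0 0 (by omega), he0]; simp
      · rw [hπ0 1 (by omega), he1]; simp
      · obtain ⟨j, rfl⟩ := Nat.exists_eq_add_of_le hi
        have := hπ ⟨j, by unfold Machine.N at hi'; omega⟩
        simp only at this
        rw [this]
        congr 1
        simp only [σ, MonoidHom.coe_mk, OneHom.coe_mk, toAdd_ofAdd]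
        rw [Finset.prod_eq_single ⟨j, by unfold Machine.N at hi'; omega⟩]
        · simp [ζ]
        · intro b _ hb
          simp [Pi.single_eq_of_ne hb]
        · simp
    | one => simp
    | mul x y _ _ hx hy =>
      refine ⟨mul_mem hx.1 hy.1, ?_⟩
      have hc : Commute x y := (Subgroup.mem_center_iff.1 hx.1 y).symm
      rw [hc.mul_pow, hx.2, hy.2, map_mul, map_mul]
      have : Commute ((σ (π x) : G)) (σ (π y) : G) :=
        (Subgroup.mem_center_iff.1 (σ (π x)).2 _).symm
      rw [Subgroup.coe_mul, this.mul_pow]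
    | inv x _ hx =>
      refine ⟨inv_mem hx.1, ?_⟩
      simp [hx.2]
  rw [key.2, hπg]
  simp

lemma Sat.a_pow_four (S : Sat D n v h) (hv : v ≤ 2) : h 0 ^ 4 = 1 := by
  have e : h 0 ^ 4 = (h 0 * h 0) * (h 0 * h 0) := by simp [pow_succ, mul_assoc]
  have : v = 0 ∨ v = 1 ∨ v = 2 := by omega
  rcases this with rfl | rfl | rfl
  · rw [e, S.v0 rfl, S.b2]
  · rw [e, S.v1 rfl, mul_one]
  · rw [S.v2 rfl, one_pow]

lemma Sat.b_pow_four (S : Sat D n v h) : h 1 ^ 4 = 1 := by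
  have e : h 1 ^ 4 = (h 1 * h 1) * (h 1 * h 1) := by simp [pow_succ, mul_assoc]
  rw [e, S.b2, mul_one]

end

end CommIsom

/-! ### The versions with the same `n` are commensurable -/

namespace CommIsom

section
variable {D : Machine} {n v : ℕ} {G : Type} [Group G] {h : ℕ → G} {A : Type} [Group A] {q : ℕ → A}

/-- Left multiplication of `A` on the first coordinate of `A × Bool`. -/
def leftMul (A : Type) [Group A] : A →* Equiv.Perm (A × Bool) where
  toFun α := Equiv.prodCongr (Equiv.mulLeft α) (Equiv.refl _)
  map_one' := by ext x <;> simp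
  map_mul' x y := by ext z <;> simp [mul_assoc]

@[simp] lemma leftMul_apply (α : A) (x : A × Bool) : leftMul A α x = (α * x.1, x.2) := rfl

/-- The permutation of two copies of `A` that exchanges them and whose square is left
multiplication by `b`. -/
def rootPerm (b : A) : Equiv.Perm (A × Bool) where
  toFun x := if x.2 then (x.1, false) else (b * x.1, true)
  invFun x := if x.2 then (b⁻¹ * x.1, false) else (x.1, true)
  left_inv x := by rcases x with ⟨x, _ | _⟩ <;> simp
  right_inv x := by rcases x with ⟨x, _ | _⟩ <;> simp

lemma rootPerm_apply (b : A) (x : A × Bool) :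
    rootPerm b x = if x.2 then (x.1, false) else (b * x.1, true) := rfl

/-- The group with trivial `a` embeds in the other versions, as a subgroup of finite index. In
version `1` it is a retract; in version `0` injectivity is seen in the action on two copies of the
group in which `a` acts by `rootPerm`. -/
lemma IsPres.exists_embedding (I : IsPres D n v G h) (hv : v = 0 ∨ v = 1) (IA : IsPres D n 2 A q) :
    ∃ φ : A →* G, Function.Injective φ ∧ φ (q 1) = h 1 ∧ φ.range.index ≠ 0 := by
  have hN : 10 ≤ D.N n := by unfold Machine.N; omega
  have S : Sat D n 2 (Function.update h 0 1) :=
    I.sat.update0 1 (fun _ _ _ => Commute.one_left _) (by omega) (by omega) (by simp)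
  obtain ⟨φ, hφ⟩ := IA.univ G _ S
  have hφ' : ∀ i < D.N n, i ≠ 0 → φ (q i) = h i := fun i hi h0 => by
    rw [hφ i hi, Function.update_of_ne h0]
  have q0 : q 0 = 1 := IA.sat.v2 rfl
  refine ⟨φ, ?_, hφ' 1 (by omega) (by omega), ?_⟩
  · rcases hv with rfl | rfl
    · have S' : Sat D n 0 (Function.update (fun i => leftMul A (q i)) 0 (rootPerm (q 1))) := by
        refine (IA.sat.map (leftMul A)).update0 _ (fun i hi _ => ?_) (fun _ => ?_) (by omega)
          (by omega)
        · have := IA.sat.cen 1 (Or.inr (Or.inl rfl)) i hi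
          ext1 x
          rcases x with ⟨x, _ | _⟩
          · simp [rootPerm_apply, ← mul_assoc, this]
          · simp [rootPerm_apply]
        · ext1 x
          rcases x with ⟨x, _ | _⟩ <;> simp [rootPerm_apply]
      obtain ⟨ψ, hψ⟩ := I.univ _ _ S'
      have : ψ.comp φ = leftMul A := IA.hom_ext fun i hi => by
        by_cases hi0 : i = 0
        · subst hi0; rw [q0]; simp
        · rw [MonoidHom.comp_apply, hφ' i hi hi0, hψ i hi, Function.update_of_ne hi0]
      intro α β e
      have e' : leftMul A α (1, true) = leftMul A β (1, true) := by
        rw [← this]; simp [e]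
      simpa using e'
    · have S' : Sat D n 1 q := by
        have := IA.sat.update0 (v' := 1) 1 (fun _ _ _ => Commute.one_left _) (by omega) (by simp)
          (by simp)
        rwa [← q0, Function.update_eq_self] at this
      obtain ⟨ψ, hψ⟩ := I.univ _ _ S'
      have : ψ.comp φ = MonoidHom.id A := IA.hom_ext fun i hi => by
        by_cases hi0 : i = 0
        · subst hi0; rw [q0]; simp
        · rw [MonoidHom.comp_apply, hφ' i hi hi0, hψ i hi]; rfl
      intro α β e
      have := congrArg ψ e
      rwa [← MonoidHom.comp_apply, ← MonoidHom.comp_apply, ‹ψ.comp φ = _›] at this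
  · -- the range and the central element `a`, whose square lies in the range, generate `G`
    have hac : ∀ g, h 0 * g = g * h 0 := fun g =>
      (Subgroup.mem_center_iff.1 (I.cen_mem (i := 0) (Or.inl rfl)) g).symm
    have ha2 : h 0 * h 0 ∈ φ.range := by
      rcases hv with rfl | rfl
      · rw [I.sat.v0 rfl, ← hφ' 1 (by omega) (by omega)]
        exact ⟨_, rfl⟩
      · rw [I.sat.v1 rfl]
        exact one_mem _
    let K : Subgroup G :=
      { carrier := {g | g ∈ φ.range ∨ g * h 0 ∈ φ.range}
        one_mem' := Or.inl (one_mem _)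
        mul_mem' := by
          rintro x y (hx | hx) (hy | hy)
          · exact Or.inl (mul_mem hx hy)
          · exact Or.inr (by rw [mul_assoc]; exact mul_mem hx hy)
          · refine Or.inr ?_
            rw [mul_assoc, ← hac, ← mul_assoc]; exact mul_mem hx hy
          · refine Or.inl ?_
            have := mul_mem hx hy
            have e : x * h 0 * (y * h 0) = x * y * (h 0 * h 0) := by
              rw [mul_assoc, ← mul_assoc (h 0), hac y]; simp [mul_assoc]
            rw [e] at this
            exact (Subgroup.mul_mem_cancel_right _ ha2).1 this
        inv_mem' := by
          rintro x (hx | hx)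
          · exact Or.inl (inv_mem hx)
          · refine Or.inr ?_
            have := mul_mem (inv_mem hx) ha2
            have e : (x * h 0)⁻¹ * (h 0 * h 0) = x⁻¹ * h 0 := by
              rw [← hac x]; group
            rwa [e] at this }
    have hK : ∀ g, g ∈ K := I.induction K fun i hi => by
      by_cases hi0 : i = 0
      · subst hi0; exact Or.inr ha2
      · exact Or.inl ⟨q i, hφ' i hi hi0⟩
    have : Finite (G ⧸ φ.range) := by
      refine Finite.of_surjective
        (fun e : Bool => if e then ((1 : G) : G ⧸ φ.range) else (((h 0)⁻¹ : G) : G ⧸ φ.range)) ?_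
      intro x
      obtain ⟨g, rfl⟩ := QuotientGroup.mk_surjective x
      rcases hK g with hg | hg
      · exact ⟨true, by simpa [QuotientGroup.eq] using hg⟩
      · refine ⟨false, ?_⟩
        have : h 0 * g ∈ φ.range := by rw [hac]; exact hg
        simpa [QuotientGroup.eq] using this
    exact Subgroup.index_ne_zero_of_finite

/-- Version `2` is a common subgroup of finite index. -/
lemma IsPres.commensurable (I : IsPres D n v G h) (hv : v = 0 ∨ v = 1) (IA : IsPres D n 2 A q)
    {v' : ℕ} {G' : Type} [Group G'] {h' : ℕ → G'} (I' : IsPres D n v' G' h')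
    (hv' : v' = 0 ∨ v' = 1) : GroupCommensurable G G' := by
  obtain ⟨φ, h1, -, h2⟩ := I.exists_embedding hv IA
  obtain ⟨φ', h1', -, h2'⟩ := I'.exists_embedding hv' IA
  exact ⟨_, _, h2, h2', ⟨(MonoidHom.ofInjective h1).symm.trans (MonoidHom.ofInjective h1')⟩⟩

end

end CommIsom

/-! ### Centralizers in free products -/

namespace CommIsom

section
open Monoid.CoprodI
variable {ι : Type} [DecidableEq ι] {M : ι → Type} [∀ i, Group (M i)] [∀ i, DecidableEq (M i)]

lemma fstIdx_of_smul {i : ι} (x : M i) (hx : x ≠ 1) (u : Word M) (hu : u.fstIdx ≠ some i) :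
    ((of x : Monoid.CoprodI M) • u).fstIdx = some i := by
  rw [← Word.cons_eq_smul (h1 := hu) (h2 := hx), Word.fstIdx_cons]

/-- Multiplying a reduced word on the right by a letter of index `j` does not change the index of
its first letter, unless that index is `j`. -/
lemma fstIdx_mul {j : ι} (y : M j) (hy : y ≠ 1) (w : Word M) :
    w = Word.empty ∨
    (∃ a, a ≠ j ∧ w.fstIdx = some a ∧ (w.prod • (of y • (Word.empty : Word M))).fstIdx = some a) ∨
    (w.fstIdx = some j ∧
      ∀ l, l ≠ j → (w.prod • (of y • (Word.empty : Word M))).fstIdx ≠ some l) := by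
  induction w using Word.consRecOn with
  | empty => exact Or.inl rfl
  | cons a x w h1 h2 ih =>
    right
    have e : (Word.cons x w h1 h2).prod • (of y • (Word.empty : Word M)) =
        (of x : Monoid.CoprodI M) • (w.prod • (of y • (Word.empty : Word M))) := by
      rw [Word.prod_cons, mul_smul]
    have hyE : (of y • (Word.empty : Word M)).fstIdx = some j :=
      fstIdx_of_smul y hy _ (by simp [Word.fstIdx, Word.empty])
    rw [e, Word.fstIdx_cons]
    by_cases haj : a = j
    · subst haj
      right
      refine ⟨rfl, fun l hl => ?_⟩
      rcases ih with rfl | ⟨b, hb, hwb, hub⟩ | ⟨hw, -⟩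
      · rw [Word.prod_empty, one_smul, smul_smul, ← map_mul]
        by_cases hxy : x * y = 1
        · rw [hxy, map_one, one_smul]; simp [Word.fstIdx, Word.empty]
        · rw [fstIdx_of_smul _ hxy _ (by simp [Word.fstIdx, Word.empty])]
          simpa using fun h => hl h.symm
      · rw [fstIdx_of_smul _ h2 _ (by rw [hub]; simpa using hb)]
        simpa using fun h => hl h.symm
      · exact absurd hw h1
    · left
      refine ⟨a, haj, rfl, fstIdx_of_smul _ h2 _ ?_⟩
      rcases ih with rfl | ⟨b, hb, hwb, hub⟩ | ⟨hw, hu⟩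
      · rw [Word.prod_empty, one_smul, hyE]
        simpa using fun h => haj h.symm
      · rw [hub, ← hwb]; exact h1
      · exact hu a haj

/-- In a free product with at least two factors, an element commuting with a nontrivial element of
each factor is trivial. -/
lemma coprod_eq_one (hι : ∀ i : ι, ∃ j, j ≠ i) (y : ∀ i, M i) (hy : ∀ i, y i ≠ 1)
    (g : Monoid.CoprodI M) (hg : ∀ i, of (y i) * g = g * of (y i)) : g = 1 := by
  -- if the reduced word of `g` starts in the factor `i`, choose `y` in a factor `j ≠ i`: the words
  -- of `y * g` and `g * y` start in different factors
  set w : Word M := g • Word.empty with hw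
  have hwg : w.prod = g := by rw [hw, Word.prod_smul]; simp
  by_contra hne
  have hwne : w ≠ Word.empty := fun e => hne (by rw [← hwg, e, Word.prod_empty])
  obtain ⟨i, hi⟩ : ∃ i, w.fstIdx = some i := by
    rcases hl : w.toList with _ | ⟨p, _⟩
    · exact absurd (Word.ext hl) hwne
    · exact ⟨p.1, by simp [Word.fstIdx, hl]⟩
  obtain ⟨j, hj⟩ := hι i
  have e1 : ((of (y j) * g) • (Word.empty : Word M)).fstIdx = some j := by
    rw [mul_smul, ← hw]
    exact fstIdx_of_smul _ (hy j) _ (by rw [hi]; simpa using fun h => hj h.symm)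
  have e2 : ((g * of (y j)) • (Word.empty : Word M)).fstIdx = some i := by
    rw [mul_smul]
    rcases fstIdx_mul (y j) (hy j) w with h | ⟨a, -, h, h'⟩ | ⟨h, -⟩
    · exact absurd h hwne
    · rw [hwg] at h'; rw [h', ← h, hi]
    · rw [hi] at h; exact absurd (Option.some_injective _ h) (Ne.symm hj)
  rw [hg j, e2] at e1
  exact hj (Option.some_injective _ e1).symm

end

end CommIsom

/-! ### Elements centralizing a subgroup of finite index -/

namespace CommIsom

section
variable {D : Machine} {n v : ℕ} {G : Type} [Group G] {h : ℕ → G}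

/-- A homomorphism to `ℤ` that counts the occurrences of `k`. -/
lemma IsPres.exists_kappa (I : IsPres D n v G h) :
    ∃ κ : G →* Multiplicative ℤ, κ (h 3) = Multiplicative.ofAdd 1 ∧
      ∀ i < D.N n, i ≠ 3 → κ (h i) = 1 := by
  let h' : ℕ → Multiplicative ℤ := fun i => if i = 3 then Multiplicative.ofAdd 1 else 1
  have e : ∀ i, i ≠ 3 → h' i = 1 := fun i hi => if_neg hi
  have T : ∀ r, tc h' r = 1 := fun r => by
    unfold tc; rw [e 4 (by omega)]; group
  have S : Sat D n v h' := by
    refine ⟨fun i hi z hz => mul_comm _ _, ?_, ?_, ?_, ?_, fun i j => mul_comm _ _, fun i j => ?_,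
      fun i => ?_, fun i => mul_comm _ _, mul_comm _ _, ?_⟩
    · rw [e 1 (by omega), mul_one]
    · rw [e 1 (by omega), e 0 (by omega), mul_one]; simp
    · rw [e 0 (by omega), mul_one]; simp
    · rw [e 0 (by omega)]; simp
    · rw [e _ (by omega), e _ (by omega)]; simp
    · rw [T, T, e _ (by omega)]
    · rw [T, e 1 (by omega), one_mul, one_mul, mul_one]
  obtain ⟨κ, hκ⟩ := I.univ _ h' S
  refine ⟨κ, ?_, fun i hi hi3 => by rw [hκ i hi, e i hi3]⟩
  rw [hκ 3 (by unfold Machine.N; omega)]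
  rfl

lemma IsPres.cenSub_normal (I : IsPres D n v G h) : (cenSub D n h).Normal := by
  refine ⟨fun x hx g => ?_⟩
  rw [(Subgroup.mem_center_iff.1 (I.cenSub_le hx) g)]
  simpa using hx

open Monoid.CoprodI in
/-- An element commuting with a subgroup of finite index lies in the subgroup generated by the
central generators: modulo those, the group is the free product of a group in which `k` has
infinite order and the infinite cyclic group generated by `f`. -/
lemma IsPres.mem_cenSub (I : IsPres D n v G h) (H : Subgroup G) (hH : H.index ≠ 0) (g : G)
    (hg : ∀ x ∈ H, x * g = g * x) : g ∈ cenSub D n h := by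
  classical
  have hN : 10 ≤ D.N n := by unfold Machine.N; omega
  set X : Set G := {g | ∃ i, (D.Cen n i ∨ i = 2) ∧ g = h i} with hX
  set R := G ⧸ Subgroup.normalClosure X
  have hR : ∀ i, (D.Cen n i ∨ i = 2) → QuotientGroup.mk' (Subgroup.normalClosure X) (h i) = 1 := by
    intro i hi
    rw [QuotientGroup.mk'_apply, QuotientGroup.eq_one_iff]
    exact Subgroup.subset_normalClosure ⟨i, hi, rfl⟩
  -- both factors are taken to be `R × ℤ`, so that they have the same type; only `R × 1` of the
  -- first and `1 × ℤ` of the second are used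
  let M : Bool → Type := fun _ => R × Multiplicative ℤ
  let ι : R →* Monoid.CoprodI M :=
    (of (M := M) (i := true)).comp (MonoidHom.inl R (Multiplicative ℤ))
  let φ : G →* Monoid.CoprodI M := ι.comp (QuotientGroup.mk' (Subgroup.normalClosure X))
  let F : Monoid.CoprodI M := of (M := M) (i := false) ((1 : R), Multiplicative.ofAdd (1 : ℤ))
  have S : Sat D n v (Function.update (fun i => φ (h i)) 2 F) := by
    refine (I.sat.map φ).update2 F fun i hi => ?_
    have : φ (h i) = 1 := by
      simp only [φ, MonoidHom.comp_apply]
      rw [hR i (Or.inl hi), map_one]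
    rw [this]
    exact Commute.one_left _
  obtain ⟨Φ, hΦ⟩ := I.univ _ _ S
  have hΦ2 : Φ (h 2) = F := by rw [hΦ 2 (by omega), Function.update_self]
  have hΦi : ∀ i < D.N n, i ≠ 2 → Φ (h i) = φ (h i) := fun i hi hi2 => by
    rw [hΦ i hi, Function.update_of_ne hi2]
  -- the inverse homomorphism, modulo the central generators
  have := I.cenSub_normal
  let mk := QuotientGroup.mk' (cenSub D n h)
  have hmk : ∀ i, D.Cen n i → mk (h i) = 1 := by
    intro i hi
    rw [QuotientGroup.mk'_apply, QuotientGroup.eq_one_iff]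
    exact Subgroup.subset_closure ⟨i, hi, rfl⟩
  have S2 : Sat D n v (Function.update (fun i => mk (h i)) 2 1) :=
    (I.sat.map mk).update2 1 fun i hi => Commute.one_right _
  obtain ⟨θ, hθ⟩ := I.univ _ _ S2
  have hθX : Subgroup.normalClosure X ≤ θ.ker := by
    refine Subgroup.normalClosure_le_normal ?_
    rintro _ ⟨i, hi, rfl⟩
    change θ (h i) = 1
    by_cases hi2 : i = 2
    · rw [hi2, hθ 2 (by omega), Function.update_self]
    · rw [hθ i (hi.resolve_right hi2).lt, Function.update_of_ne hi2]
      exact hmk i (hi.resolve_right hi2)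
  let θ' : R →* G ⧸ cenSub D n h := QuotientGroup.lift _ θ hθX
  let Ψ : Monoid.CoprodI M →* G ⧸ cenSub D n h := Monoid.CoprodI.lift (M := M) fun b =>
    if b then θ'.comp (MonoidHom.fst R (Multiplicative ℤ)) else
      (zpowersHom (G ⧸ cenSub D n h) (mk (h 2))).comp (MonoidHom.snd R (Multiplicative ℤ))
  have hΨ : Ψ.comp Φ = mk := I.hom_ext fun i hi => by
    by_cases hi2 : i = 2
    · subst hi2
      rw [MonoidHom.comp_apply, hΦ2]
      simp only [Ψ, F, lift_of, Bool.false_eq_true, if_false]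
      exact zpow_one (mk (h 2))
    · rw [MonoidHom.comp_apply, hΦi i hi hi2]
      simp only [Ψ, φ, ι, MonoidHom.comp_apply, lift_of, if_true]
      change θ (h i) = mk (h i)
      rw [hθ i hi, Function.update_of_ne hi2]
  -- nontrivial powers of `k` and `f` lie in `H`, so `g` commutes with an element of each factor
  obtain ⟨κ, hκ3, hκ⟩ := I.exists_kappa
  have hκX : Subgroup.normalClosure X ≤ κ.ker := by
    refine Subgroup.normalClosure_le_normal ?_
    rintro _ ⟨i, hi, rfl⟩
    refine hκ i ?_ ?_
    · rcases hi with hi | rfl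
      · exact hi.lt
      · omega
    · unfold Machine.Cen at hi; omega
  obtain ⟨p, hp, -, hpH⟩ := Subgroup.exists_pow_mem_of_index_ne_zero hH (h 3)
  obtain ⟨q, hq, -, hqH⟩ := Subgroup.exists_pow_mem_of_index_ne_zero hH (h 2)
  let y : ∀ b : Bool, M b := fun b =>
    if b then (QuotientGroup.mk' (Subgroup.normalClosure X) (h 3 ^ p), 1)
    else (1, Multiplicative.ofAdd (q : ℤ))
  have hΦg : Φ g = 1 := by
    refine coprod_eq_one (M := M) (fun i => ⟨!i, by simp⟩) y ?_ (Φ g) ?_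
    · rintro (_ | _) e
      · have := congrArg (fun z : R × Multiplicative ℤ => Multiplicative.toAdd z.2) e
        simp [y, Prod.snd_one] at this
        omega
      · have h1 := congrArg (fun z : R × Multiplicative ℤ => z.1) e
        simp only [y, if_true] at h1
        have h2 : h 3 ^ p ∈ Subgroup.normalClosure X := by
          rw [← QuotientGroup.eq_one_iff]; exact h1
        have h3 : κ (h 3 ^ p) = 1 := hκX h2
        rw [map_pow, hκ3] at h3
        have h4 := congrArg Multiplicative.toAdd h3
        simp at h4
        omega
    · rintro (_ | _)
      · have e : of (M := M) (i := false) (y false) = Φ (h 2 ^ q) := by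
          rw [map_pow, hΦ2]
          simp only [F]
          rw [← map_pow]
          congr 1
          simp only [y, Bool.false_eq_true, if_false]
          refine Prod.ext (one_pow q).symm ?_
          change Multiplicative.ofAdd (q : ℤ) = Multiplicative.ofAdd (1 : ℤ) ^ q
          rw [← ofAdd_nsmul]
          simp
        rw [e, ← map_mul, hg _ hqH, map_mul]
      · have e : of (M := M) (i := true) (y true) = Φ (h 3 ^ p) := by
          rw [map_pow, hΦi 3 (by omega) (by omega)]
          simp only [φ, ι, MonoidHom.comp_apply]
          rw [← map_pow]
          congr 1
        rw [e, ← map_mul, hg _ hpH, map_mul]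
  have : mk g = 1 := by
    rw [← hΨ, MonoidHom.comp_apply, hΦg, map_one]
  rwa [QuotientGroup.mk'_apply, QuotientGroup.eq_one_iff] at this

open scoped IsMulCommutative in
/-- If `G` is commensurable to `G'`, then `G'` has at most as many generators `z_j` as `G`: powers
of those of `G'` give elements of the centre of `K ≤ G`, these lie in `cenSub` by
`IsPres.mem_cenSub`, and they remain independent in `ℤⁿ`. -/
lemma IsPres.le_of_commensurable (I : IsPres D n v G h) (hv : v ≤ 2) {m v' : ℕ} {G' : Type}
    [Group G'] {h' : ℕ → G'} (I' : IsPres D m v' G' h') (K : Subgroup G)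
    (K' : Subgroup G') (hK : K.index ≠ 0) (hK' : K'.index ≠ 0) (e : K ≃* K') : m ≤ n := by
  classical
  obtain ⟨π, hπ0, hπ⟩ := I.exists_pi
  obtain ⟨π', -, hπ'⟩ := I'.exists_pi
  have hz : ∀ j : Fin m, D.Cen m (10 + D.rules.length + j) := fun j =>
    Or.inr (Or.inr ⟨by omega, by unfold Machine.N; omega⟩)
  choose M hM _ hMK using fun j : Fin m =>
    Subgroup.exists_pow_mem_of_index_ne_zero hK' (h' (10 + D.rules.length + j))
  let y : Fin m → Subgroup.center K := fun j => ⟨e.symm ⟨_, hMK j⟩, by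
    rw [Subgroup.mem_center_iff]
    intro x
    apply e.injective
    rw [map_mul, map_mul, e.apply_symm_apply]
    ext
    exact Subgroup.mem_center_iff.1 (pow_mem (I'.cen_mem (hz j)) _) _⟩
  have hyC : ∀ x : Subgroup.center K, ((x : K) : G) ∈ cenSub D n h := fun x =>
    I.mem_cenSub K hK _ fun z hz => by
      have := Subgroup.mem_center_iff.1 x.2 ⟨z, hz⟩
      simpa using congrArg Subtype.val this
  let ρ : Subgroup.center K →* Multiplicative (Fin n → ℤ) :=
    (π.comp K.subtype).comp (Subgroup.center K).subtype
  let ρ' : Subgroup.center K →* Multiplicative (Fin m → ℤ) :=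
    ((π'.comp K'.subtype).comp e.toMonoidHom).comp (Subgroup.center K).subtype
  have hρ' : ∀ j, ρ' (y j) = Multiplicative.ofAdd (M j • Pi.single j (1 : ℤ)) := by
    intro j
    have : ρ' (y j) = π' (h' (10 + D.rules.length + j) ^ M j) := by simp [ρ', y]
    rw [this, map_pow, hπ', ofAdd_nsmul]
  have LI : LinearIndependent ℤ (fun j => Multiplicative.toAdd (ρ (y j))) := by
    rw [Fintype.linearIndependent_iff]
    intro c hc j
    have h1 : ρ (∏ j, y j ^ c j) = 1 := by
      apply Multiplicative.toAdd.injective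
      rw [map_prod, toAdd_prod]
      simpa using hc
    -- the kernel of `π` on `cenSub` has exponent `4`
    have h2 : (∏ j, y j ^ c j) ^ 4 = 1 := by
      ext
      simpa using I.pow_eq_one (I.sat.a_pow_four hv) I.sat.b_pow_four π hπ0 hπ (hyC _) h1
    have h3 := congrArg ρ' h2
    rw [map_pow, map_prod, map_one] at h3
    have h4 := congrFun (congrArg Multiplicative.toAdd h3) j
    simp only [map_zpow, hρ', toAdd_pow, toAdd_prod, toAdd_zpow, toAdd_ofAdd, toAdd_one,
      Pi.smul_apply, Finset.sum_apply, Pi.zero_apply] at h4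
    rw [Finset.sum_eq_single j] at h4
    · simp at h4
      have := hM j
      omega
    · intro b _ hb
      simp [Pi.single_eq_of_ne hb.symm]
    · simp
  simpa using LI.fintype_card_le_finrank

/-- The number `n` is a commensurability invariant of the groups. -/
lemma IsPres.eq_of_commensurable (I : IsPres D n v G h) (hv : v ≤ 2) {m v' : ℕ} {G' : Type}
    [Group G'] {h' : ℕ → G'} (I' : IsPres D m v' G' h') (hv' : v' ≤ 2)
    (H : GroupCommensurable G G') : n = m := by
  obtain ⟨K, K', hK, hK', ⟨e⟩⟩ := H
  exact le_antisymm (I'.le_of_commensurable hv' I K' K hK' hK e.symm)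
    (I.le_of_commensurable hv I' K K' hK hK' e)

/-- If `b` is nontrivial, then the versions `0` and `1` are not isomorphic: only the former has
a central element of order four. The homomorphism `π` shows that its image in the other group would
be a product of powers of the two involutions `a` and `b`. -/
lemma IsPres.not_equiv (I : IsPres D n 0 G h) (hb : h 1 ≠ 1) {G' : Type}
    [Group G'] {h' : ℕ → G'} (I' : IsPres D n 1 G' h') : ¬ Nonempty (G ≃* G') := by
  rintro ⟨e⟩
  obtain ⟨π, hπ0, hπ⟩ := I'.exists_pi
  have h1 : e (h 0) ∈ cenSub D n h' := by
    refine I'.mem_cenSub ⊤ (by simp) _ fun x _ => ?_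
    apply e.symm.injective
    rw [map_mul, map_mul, e.symm_apply_apply]
    exact Subgroup.mem_center_iff.1 (I.cen_mem (Or.inl rfl)) _
  have h2 : π (e (h 0)) = 1 := by
    have h4 : π (e (h 0)) ^ 4 = 1 := by
      rw [← map_pow, ← map_pow, I.sat.a_pow_four (by omega), map_one, map_one]
    apply Multiplicative.toAdd.injective
    have h5 := congrArg Multiplicative.toAdd h4
    rw [toAdd_pow, toAdd_one] at h5
    ext j
    have := congrFun h5 j
    simpa using this
  have h3 := I'.pow_eq_one (e := 2) (by rw [pow_two, I'.sat.v1 rfl]) (by rw [pow_two, I'.sat.b2])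
    π hπ0 hπ h1 h2
  apply hb
  apply e.injective
  rw [← I.sat.v0 rfl, map_one, map_mul, ← pow_two, h3]

end

end CommIsom

/-! ### A permutation model in which `b` is nontrivial -/

namespace CommIsom

section
variable (X : Type)

/-- The auxiliary large set that makes all fibres in the construction equinumerous. -/
abbrev Aux : Type := ℕ → X → ZMod 2

/-- The set on which the generators act. -/
abbrev Om : Type := X × (ZMod 2 × ((X → ZMod 2) × Aux X))

variable {X}

/-- The permutation that adds to the bit the value of the function at the first coordinate. -/
def ta : Equiv.Perm (Om X) where
  toFun x := (x.1, x.2.1 + x.2.2.1 x.1, x.2.2)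
  invFun x := (x.1, x.2.1 - x.2.2.1 x.1, x.2.2)
  left_inv x := by simp
  right_inv x := by simp

lemma ta_apply (x : Om X) : ta x = (x.1, x.2.1 + x.2.2.1 x.1, x.2.2) := rfl

variable [AddCommGroup X]

/-- Translation of the first coordinate. -/
def sg : Multiplicative X →* Equiv.Perm (Om X) where
  toFun v := Equiv.prodCongr (Equiv.addLeft v.toAdd) (Equiv.refl _)
  map_one' := by ext1 x; simp
  map_mul' x y := by ext1 z; exact Prod.ext (add_assoc _ _ _) rfl

/-- The conjugate of `ta` by the translation by `v`. -/
def taAt (v : X) : Equiv.Perm (Om X) := (sg (Multiplicative.ofAdd v))⁻¹ * ta * sg (.ofAdd v)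

lemma sg_apply (v : X) (x : Om X) : sg (Multiplicative.ofAdd v) x = (v + x.1, x.2) := rfl

lemma taAt_apply (v : X) (x : Om X) : taAt v x = (x.1, x.2.1 + x.2.2.1 (v + x.1), x.2.2) := by
  unfold taAt
  rw [Equiv.Perm.mul_apply, Equiv.Perm.mul_apply, Equiv.Perm.inv_eq_iff_eq]
  rfl

/-- The point of `Om X` with first coordinate `0`, bit `j` and function `χ`. -/
def pt (χ : X → ZMod 2) (j : ZMod 2) : Om X := (0, j, χ, 0)

/-- A map all of whose fibres are in bijection with `I` is isomorphic to a projection, and one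
point can be prescribed. -/
lemma exists_fiber_equiv {T B I : Type} (pat : T → B)
    (H : ∀ b, Nonempty ({t // pat t = b} ≃ I)) (t₀ : T) (i₀ : I) :
    ∃ Θ : T ≃ B × I, (∀ t, (Θ t).1 = pat t) ∧ Θ t₀ = (pat t₀, i₀) := by
  classical
  let e := fun b => Classical.choice (H b)
  let e' : ∀ b, {t // pat t = b} ≃ I := fun b =>
    if hb : pat t₀ = b then (e b).trans (Equiv.swap (e b ⟨t₀, hb⟩) i₀) else e b
  let Θ : T ≃ B × I := (Equiv.sigmaFiberEquiv pat).symm.trans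
    ((Equiv.sigmaCongrRight e').trans (Equiv.sigmaEquivProd B I))
  have hΘ : ∀ t, Θ t = (pat t, e' (pat t) ⟨t, rfl⟩) := fun t => rfl
  refine ⟨Θ, fun t => by rw [hΘ], ?_⟩
  rw [hΘ]
  simp [e']

/-- For an injective endomorphism `α` of `X` and `r : X`, the set `Om X` with the translations by
`α u` and the conjugate of `ta` by `r` is isomorphic to `Om X` with the translations by `u` and
`ta` itself. -/
lemma exists_restrict (α : X →+ X) (hα : Function.Injective α) (r : X) (χ : X → ZMod 2) :
    ∃ E : Equiv.Perm (Om X), (∀ u : X, E * sg (.ofAdd (α u)) = sg (.ofAdd u) * E) ∧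
      E * taAt r = ta * E ∧ ∀ j, E (pt χ j) = pt (fun u => χ (r + α u)) j := by
  classical
  let Q := X ⧸ α.range
  -- coset representatives, normalized at the trivial coset
  obtain ⟨rep, hrep, hrep0⟩ : ∃ rep : Q → X, (∀ q, (rep q : Q) = q) ∧ rep 0 = 0 := by
    refine ⟨fun q => if q = 0 then 0 else Quotient.out q, fun q => ?_, by simp⟩
    by_cases hq : q = 0
    · simp [hq]
    · simp only [hq, if_false]
      exact Quotient.out_eq q
  have hex : ∀ x : X, ∃ u, α u + rep (x : Q) = x := fun x => by
    have : ((rep (x : Q) : X) : Q) = (x : Q) := hrep _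
    rw [QuotientAddGroup.eq] at this
    obtain ⟨u, hu⟩ := this
    exact ⟨u, by rw [hu]; abel⟩
  choose U hU using hex
  have hmk : ∀ u x, ((α u + x : X) : Q) = (x : Q) := fun u x => by
    rw [eq_comm, QuotientAddGroup.eq]
    exact ⟨u, by abel⟩
  have hUeq : ∀ u q, U (α u + rep q) = u := fun u q => by
    have := hU (α u + rep q)
    rw [hmk, hrep] at this
    exact hα (add_right_cancel this)
  -- `X` is the union of the cosets of `α X`, each identified with `X`
  let split : X ≃ X × Q :=
    { toFun := fun x => (U x, x)
      invFun := fun p => α p.1 + rep p.2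
      left_inv := hU
      right_inv := fun p => Prod.ext (hUeq _ _) (by
        change ((α p.1 + rep p.2 : X) : Q) = p.2
        rw [hmk, hrep]) }
  -- `pat` is the part of the function that determines the action of `taAt r` on a coset of `α X`
  let T := Q × ((X → ZMod 2) × Aux X)
  let pat : T → (X → ZMod 2) := fun t u => t.2.1 (r + α u + rep t.1)
  -- by the Schröder-Bernstein theorem its fibres are equinumerous with `Aux X`
  have hfib : ∀ b, Nonempty ({t // pat t = b} ≃ Aux X) := by
    intro b
    refine Function.Embedding.antisymm ⟨fun t => fun k => Nat.casesOn k t.1.2.1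
      (fun k => Nat.casesOn k (Pi.single (rep t.1.1) 1) t.1.2.2), ?_⟩
      ⟨fun ι => ⟨(0, (Function.extend (fun u => r + α u) b 0, ι)), ?_⟩, ?_⟩
    · rintro ⟨⟨q, F, ι⟩, h⟩ ⟨⟨q', F', ι'⟩, h'⟩ e
      have e0 : F = F' := congrFun e 0
      have e1 : (Pi.single (rep q) 1 : X → ZMod 2) = Pi.single (rep q') 1 := congrFun e 1
      have e2 : ∀ k, ι k = ι' k := fun k => congrFun e (k + 2)
      have eq : q = q' := by
        have := congrFun e1 (rep q)
        simp only [Pi.single_eq_same] at this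
        by_contra hq
        rw [Pi.single_eq_of_ne (fun hh => hq (by rw [← hrep q, hh, hrep]))] at this
        exact one_ne_zero this
      subst eq e0
      have : ι = ι' := funext e2
      subst this
      rfl
    · funext u
      have hinj : Function.Injective (fun u => r + α u) := fun u u' h => hα (add_left_cancel h)
      change Function.extend (fun u => r + α u) b 0 (r + α u + rep 0) = b u
      rw [hrep0, add_zero]
      exact hinj.extend_apply _ _ u
    · intro ι ι' e
      exact congrArg (fun t => t.1.2.2) e
  obtain ⟨Θ, hΘ1, hΘ2⟩ := exists_fiber_equiv pat hfib ((0 : Q), (χ, 0)) (0 : Aux X)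
  let shuffle : (X × Q) × (ZMod 2 × ((X → ZMod 2) × Aux X)) ≃ X × (ZMod 2 × T) :=
    { toFun := fun p => (p.1.1, p.2.1, p.1.2, p.2.2)
      invFun := fun p => ((p.1, p.2.2.1), p.2.1, p.2.2.2)
      left_inv := fun _ => rfl
      right_inv := fun _ => rfl }
  let E : Equiv.Perm (Om X) := (Equiv.prodCongr split (Equiv.refl _)).trans
    (shuffle.trans (Equiv.prodCongr (Equiv.refl _) (Equiv.prodCongr (Equiv.refl _) Θ)))
  have hE : ∀ x : Om X, E x = (U x.1, x.2.1, Θ ((x.1 : Q), x.2.2)) := fun x => rfl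
  have hU0 : U 0 = 0 := by simpa [hrep0] using hUeq 0 0
  have hUα : ∀ u x, U (α u + x) = u + U x := fun u x => by
    have h1 := hU (α u + x)
    rw [hmk] at h1
    have h2 := hU x
    apply hα
    rw [map_add]
    have : α (U (α u + x)) + rep (x : Q) = α u + α (U x) + rep (x : Q) := by
      rw [h1, add_assoc, h2]
    exact add_right_cancel this
  refine ⟨E, fun u => ?_, ?_, fun j => ?_⟩
  · ext1 x
    rw [Equiv.Perm.mul_apply, Equiv.Perm.mul_apply, hE, hE, sg_apply, sg_apply]
    simp only [hmk, hUα]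
  · ext1 x
    rw [Equiv.Perm.mul_apply, Equiv.Perm.mul_apply, hE, hE, taAt_apply, ta_apply]
    simp only [hΘ1]
    have : pat ((x.1 : Q), x.2.2) (U x.1) = x.2.2.1 (r + x.1) := by
      simp only [pat]
      rw [add_assoc, hU]
    rw [this]
  · rw [hE]
    simp only [pt, hU0]
    change (0, j, Θ ((0 : Q), (χ, 0))) = _
    rw [hΘ2]
    simp [pat, hrep0]

/-- The permutation interpreting the generator `s` of a rule `r + α u ↦ c + β u`. -/
lemma exists_rule_perm (α β : X →+ X) (hα : Function.Injective α) (hβ : Function.Injective β)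
    (r c : X) (χ : X → ZMod 2) (hχ : ∀ u, χ (r + α u) = χ (c + β u)) :
    ∃ s : Equiv.Perm (Om X), (∀ u : X, s * sg (.ofAdd (α u)) = sg (.ofAdd (β u)) * s) ∧
      s * taAt r = taAt c * s ∧ ∀ j, s (pt χ j) = pt χ j := by
  obtain ⟨E, h1, h2, h3⟩ := exists_restrict α hα r χ
  obtain ⟨F, k1, k2, k3⟩ := exists_restrict β hβ c χ
  refine ⟨F⁻¹ * E, fun u => ?_, ?_, fun j => ?_⟩
  · rw [mul_assoc, h1, inv_mul_eq_iff_eq_mul, ← mul_assoc, ← mul_assoc, k1]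
    group
  · rw [mul_assoc, h2, inv_mul_eq_iff_eq_mul, ← mul_assoc, ← mul_assoc, k2]
    group
  · rw [Equiv.Perm.mul_apply, h3, Equiv.Perm.inv_eq_iff_eq, k3]
    simp only [hχ]

end

section
variable {Ω : Type}

/-- Left multiplication of permutations of `Ω` on `Perm Ω × ZMod 2`. -/
def lmul (Ω : Type) : Equiv.Perm Ω →* Equiv.Perm (Equiv.Perm Ω × ZMod 2) where
  toFun γ := Equiv.prodCongr (Equiv.mulLeft γ) (Equiv.refl _)
  map_one' := by ext1 x; simp
  map_mul' x y := by ext1 z; exact Prod.ext (mul_assoc _ _ _) rfl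

/-- Adding to the bit a function of the permutation. -/
def addBit (κ : Equiv.Perm Ω → ZMod 2) : Equiv.Perm (Equiv.Perm Ω × ZMod 2) where
  toFun x := (x.1, x.2 + κ x.1)
  invFun x := (x.1, x.2 - κ x.1)
  left_inv x := by simp
  right_inv x := by simp

lemma lmul_apply (γ : Equiv.Perm Ω) (x) : lmul Ω γ x = (γ * x.1, x.2) := rfl
lemma addBit_apply (κ : Equiv.Perm Ω → ZMod 2) (x) : addBit κ x = (x.1, x.2 + κ x.1) := rfl

open Classical in
/-- Given two points `p ≠ q`, this tells whether `π⁻¹ p` comes before `π⁻¹ q` in a fixed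
ordering. -/
noncomputable def ordBit (p q : Ω) (π : Equiv.Perm Ω) : ZMod 2 :=
  if WellOrderingRel (π⁻¹ p) (π⁻¹ q) then 1 else 0

lemma ordBit_fix {p q : Ω} {γ : Equiv.Perm Ω} (hp : γ p = p) (hq : γ q = q) (π) :
    ordBit p q (γ * π) = ordBit p q π := by
  have hp' : γ⁻¹ p = p := by rw [Equiv.Perm.inv_eq_iff_eq, hp]
  have hq' : γ⁻¹ q = q := by rw [Equiv.Perm.inv_eq_iff_eq, hq]
  unfold ordBit
  rw [mul_inv_rev, Equiv.Perm.mul_apply, Equiv.Perm.mul_apply, hp', hq']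

lemma ordBit_swap {p q : Ω} (hpq : p ≠ q) {γ : Equiv.Perm Ω} (hp : γ p = q) (hq : γ q = p) (π) :
    ordBit p q (γ * π) = ordBit p q π + 1 := by
  have hp' : γ⁻¹ p = q := by rw [Equiv.Perm.inv_eq_iff_eq, hq]
  have hq' : γ⁻¹ q = p := by rw [Equiv.Perm.inv_eq_iff_eq, hp]
  have hne : π⁻¹ p ≠ π⁻¹ q := fun h => hpq (π⁻¹.injective h)
  unfold ordBit
  rw [mul_inv_rev, Equiv.Perm.mul_apply, Equiv.Perm.mul_apply, hp', hq']
  rcases trichotomous_of WellOrderingRel (π⁻¹ p) (π⁻¹ q) with h | h | h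
  · rw [if_neg (asymm h), if_pos h]; rfl
  · exact absurd h hne
  · rw [if_pos h, if_neg (asymm h)]; rfl

end

/-- A vector of natural numbers as a vector of integers. -/
def zv (r : Fin 5 → ℕ) : Fin 5 → ℤ := fun j => r j

/-- Coordinatewise multiplication by a vector. -/
def diagHom (m : Fin 5 → ℕ) : (Fin 5 → ℤ) →+ (Fin 5 → ℤ) where
  toFun u := zv m * u
  map_zero' := mul_zero _
  map_add' := mul_add _

lemma diagHom_inj {m : Fin 5 → ℕ} (hm : ∀ j, 0 < m j) : Function.Injective (diagHom m) := by
  intro u v h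
  ext j
  have := congrFun h j
  simp only [diagHom, AddMonoidHom.coe_mk, ZeroHom.coe_mk, Pi.mul_apply, zv] at this
  exact mul_left_cancel₀ (by exact_mod_cast (hm j).ne') this

/-- If some set of integer vectors is invariant under all rules and contains the starting
vector `g n` but not the halting vector `g0`, then `b` is nontrivial: the generators other than `k`
are interpreted so that the rules fix two points, and the conjugate of `t` by `x ^ v` fixes or
exchanges them according to the invariant. -/
lemma exists_sat (D : Machine) (n : ℕ) (χ : (Fin 5 → ℤ) → ZMod 2) (h0 : χ (zv D.g0) = 0)
    (hg : χ (zv (D.g n)) = 1)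
    (hχ : ∀ (i : Fin D.rules.length) (u : Fin 5 → ℤ),
      χ (zv D.rules[i].r + zv D.rules[i].m * u) = χ (zv D.rules[i].c + zv D.rules[i].a * u)) :
    ∃ (P : Type) (_ : Group P) (h : ℕ → P), Sat D n 2 h ∧ h 1 ≠ 1 := by
  choose s s1 s2 s3 using fun i : Fin D.rules.length =>
    exists_rule_perm (diagHom D.rules[i].m) (diagHom D.rules[i].a) (diagHom_inj D.rules[i].hm)
      (diagHom_inj D.rules[i].ha) (zv D.rules[i].r) (zv D.rules[i].c) χ (hχ i)
  let e : Fin 5 → Fin 5 → ℤ := fun j => Pi.single j 1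
  let γ : ℕ → Equiv.Perm (Om (Fin 5 → ℤ)) := fun i =>
    if i = 4 then ta else
    if H : 5 ≤ i ∧ i < 10 then sg (.ofAdd (e ⟨i - 5, by omega⟩)) else
    if H : 10 ≤ i ∧ i < 10 + D.rules.length then s ⟨i - 10, by omega⟩ else 1
  have γ4 : γ 4 = ta := rfl
  have γx : ∀ j : Fin 5, γ (5 + j) = sg (.ofAdd (e j)) := fun j => by
    simp only [γ]
    rw [if_neg (by omega), dif_pos ⟨by omega, by omega⟩]
    congr
    simp
  have γs : ∀ i : Fin D.rules.length, γ (10 + i) = s i := fun i => by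
    simp only [γ]
    rw [if_neg (by omega), dif_neg (by omega), dif_pos ⟨by omega, by omega⟩]
    congr
    simp
  have γ1 : ∀ i, i < 4 ∨ 10 + D.rules.length ≤ i → γ i = 1 := fun i hi => by
    simp only [γ]
    rw [if_neg (by omega), dif_neg (by omega), dif_neg (by omega)]
  have γxp : ∀ (j : Fin 5) (p : ℕ), γ (5 + j) ^ p = sg (.ofAdd (Pi.single j (p : ℤ))) := by
    intro j p
    rw [γx, ← map_pow, ← ofAdd_nsmul]
    simp only [e]
    rw [← Pi.single_smul]
    simp
  have γxw : ∀ r, xw γ r = sg (.ofAdd (zv r)) := by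
    intro r
    have e0 := γxp 0 (r 0)
    have e1 := γxp 1 (r 1)
    have e2 := γxp 2 (r 2)
    have e3 := γxp 3 (r 3)
    have e4 := γxp 4 (r 4)
    unfold xw
    refine (congrArg₂ _ (congrArg₂ _ (congrArg₂ _ (congrArg₂ _ e0 e1) e2) e3) e4).trans ?_
    simp only [← map_mul, ← ofAdd_add]
    congr 2
    ext j
    fin_cases j <;> simp [zv]
  have γtc : ∀ r, tc γ r = taAt (zv r) := by
    intro r
    unfold tc taAt
    rw [γxw, γ4]
  let L := lmul (Om (Fin 5 → ℤ))
  let κ := ordBit (pt χ 0) (pt χ 1)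
  have hpt : pt χ 0 ≠ pt χ 1 := fun h => by
    have := congrArg (fun x : Om (Fin 5 → ℤ) => x.2.1) h
    exact zero_ne_one this
  let h : ℕ → Equiv.Perm (Equiv.Perm (Om (Fin 5 → ℤ)) × ZMod 2) := fun i =>
    if i = 1 then addBit (fun _ => 1) else if i = 3 then addBit κ else L (γ i)
  have hL : ∀ i, i ≠ 1 → i ≠ 3 → h i = L (γ i) := fun i hi hi' => by
    simp only [h]; rw [if_neg hi, if_neg hi']
  have hh1 : h 1 = addBit (fun _ => 1) := rfl
  have hh3 : h 3 = addBit κ := rfl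
  have hc : ∀ i, i ≠ 1 → D.Cen n i → h i = 1 := fun i hi hi' => by
    rw [hL i hi (by unfold Machine.Cen at hi'; omega), γ1 i (by unfold Machine.Cen at hi'; omega),
      map_one]
  have hb : ∀ i, h 1 * h i = h i * h 1 := fun i => by
    by_cases hi : i = 1
    · rw [hi]
    by_cases hi' : i = 3
    · rw [hi', hh1, hh3]
      ext1 x
      simp [addBit_apply, add_right_comm]
    · rw [hL i hi hi', hh1]
      ext1 x
      simp [addBit_apply, L, lmul_apply]
  have hx : ∀ j : Fin 5, h (5 + j) = L (γ (5 + j)) := fun j => hL _ (by omega) (by omega)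
  have hs : ∀ i : Fin D.rules.length, h (10 + i) = L (γ (10 + i)) :=
    fun i => hL _ (by omega) (by omega)
  have htc : ∀ r, tc h r = L (taAt (zv r)) := fun r => by
    rw [← γtc, map_tc]
    exact tc_congr (fun i hi _ => hL i (by omega) (by omega)) r
  have hta : ∀ v j, taAt v (pt χ j) = pt χ (j + χ v) := fun v j => by
    rw [taAt_apply]; simp [pt]
  -- `k` commutes with the permutations that fix both points
  have hk : ∀ δ : Equiv.Perm (Om (Fin 5 → ℤ)), δ (pt χ 0) = pt χ 0 → δ (pt χ 1) = pt χ 1 →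
      h 3 * L δ = L δ * h 3 := by
    intro δ d0 d1
    ext1 x
    simp [hh3, addBit_apply, L, lmul_apply, κ, ordBit_fix d0 d1]
  refine ⟨_, inferInstance, h, ⟨fun i hi y hy => ?_, ?_, by omega, by omega, fun _ => ?_,
    fun i j => ?_, fun i j => ?_, fun i => ?_, fun i => ?_, ?_, ?_⟩, ?_⟩
  · by_cases hi1 : i = 1
    · subst hi1; exact hb y
    · rw [hc i hi1 hi, one_mul, mul_one]
  · rw [hh1]
    ext1 x
    simp only [Equiv.Perm.mul_apply, addBit_apply, Equiv.Perm.one_apply, add_assoc]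
    have : (1 : ZMod 2) + 1 = 0 := rfl
    rw [this, add_zero]
  · exact hc 0 (by omega) (Or.inl rfl)
  · rw [hx, hx, ← map_mul, ← map_mul, γx, γx, ← map_mul sg, ← map_mul sg,
      mul_comm (Multiplicative.ofAdd (e i))]
  · rw [hx, hs, ← map_pow, ← map_pow, ← map_mul, ← map_mul, γxp, γxp, γs]
    have := s1 i (e j)
    have em : ∀ m : Fin 5 → ℕ, diagHom m (e j) = Pi.single j (m j : ℤ) := fun m => by
      ext l
      by_cases hl : l = j
      · subst hl; simp [diagHom, zv, e]
      · simp [diagHom, zv, e, hl]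
    rw [em, em] at this
    rw [this]
  · rw [htc, htc, hs, ← map_mul, ← map_mul, γs, s2]
  · rw [hs, γs]
    exact hk _ (s3 i 0) (s3 i 1)
  · rw [htc]
    apply hk <;> rw [hta, h0, add_zero]
  · rw [htc]
    ext1 x
    have := ordBit_swap hpt (γ := taAt (zv (D.g n))) (by rw [hta, hg, zero_add])
      (by rw [hta, hg]; rfl) x.1
    simp [hh3, hh1, addBit_apply, L, lmul_apply, κ, this, add_assoc]
  · intro h1
    have := congrArg (fun p => (p (1, 0)).2) h1
    simp [hh1, addBit_apply] at this

end CommIsom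

/-! ### Invariants of deterministic machines -/

namespace CommIsom
open Relation

/-- If the machine is deterministic and halts at `g0`, then the set of integer vectors from which
`g0` can be reached is invariant under all rules. Residues `r < m` and `c < a` make sure that a
rule neither creates nor removes negative coordinates. -/
lemma exists_invariant (D : Machine) (n : ℕ)
    (hlt : ∀ i : Fin D.rules.length, ∀ j, D.rules[i].r j < D.rules[i].m j ∧
      D.rules[i].c j < D.rules[i].a j)
    (hdet : ∀ α β γ, D.Step α β → D.Step α γ → β = γ) (hterm : ∀ β, ¬ D.Step D.g0 β)
    (hn : ¬ ReflTransGen D.Step (D.g n) D.g0) :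
    ∃ χ : (Fin 5 → ℤ) → ZMod 2, χ (zv D.g0) = 0 ∧ χ (zv (D.g n)) = 1 ∧
      ∀ (i : Fin D.rules.length) (u : Fin 5 → ℤ),
        χ (zv D.rules[i].r + zv D.rules[i].m * u) = χ (zv D.rules[i].c + zv D.rules[i].a * u) := by
  classical
  have zinj : ∀ α β, zv α = zv β → α = β := fun α β h => by
    funext j
    have := congrFun h j
    simpa [zv] using this
  -- as the residues are reduced, `r + m * u` is nonnegative only if `u` is
  have nonneg : ∀ (r m β : Fin 5 → ℕ) (u : Fin 5 → ℤ), (∀ j, r j < m j) →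
      zv r + zv m * u = zv β → ∃ w, u = zv w ∧ β = r + m * w := by
    intro r m β u hr h
    have hu : ∀ j, 0 ≤ u j := fun j => by
      have h1 := congrFun h j
      simp only [zv, Pi.add_apply, Pi.mul_apply] at h1
      have h2 : (r j : ℤ) < m j := by exact_mod_cast hr j
      by_contra hneg
      have : (m j : ℤ) * u j ≤ (m j : ℤ) * (-1) :=
        mul_le_mul_of_nonneg_left (by omega) (by omega)
      omega
    obtain ⟨w, hw⟩ : ∃ w, u = zv w := ⟨fun j => (u j).toNat, by
      funext j; simp [zv, hu j]⟩
    refine ⟨w, hw, zinj _ _ ?_⟩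
    rw [← h, hw]
    funext j
    simp [zv]
  have zadd : ∀ r m w : Fin 5 → ℕ, zv r + zv m * zv w = zv (r + m * w) := fun r m w => by
    funext j; simp [zv]
  refine ⟨fun α => if ∃ β, α = zv β ∧ ReflTransGen D.Step β D.g0 then 0 else 1, ?_, ?_, ?_⟩
  · exact if_pos ⟨_, rfl, .refl⟩
  · refine if_neg ?_
    rintro ⟨β, h, hβ⟩
    rw [← zinj _ _ h] at hβ
    exact hn hβ
  · intro i u
    refine if_congr ⟨?_, ?_⟩ rfl rfl
    -- by determinism, the run from `β` to `g0` begins with the given rule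
    · rintro ⟨β, h, hβ⟩
      obtain ⟨w, rfl, rfl⟩ := nonneg _ _ _ _ (fun j => (hlt i j).1) h
      refine ⟨_, zadd _ _ _, ?_⟩
      rcases hβ.cases_head with e | ⟨γ, s, hγ⟩
      · exact absurd ⟨i, w, e.symm, rfl⟩ (hterm _)
      · rwa [hdet _ _ _ s ⟨i, w, rfl, rfl⟩] at hγ
    · rintro ⟨β, h, hβ⟩
      obtain ⟨w, rfl, rfl⟩ := nonneg _ _ _ _ (fun j => (hlt i j).2) h
      exact ⟨_, zadd _ _ _, .head ⟨i, w, rfl, rfl⟩ hβ⟩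

end CommIsom

/-! ### Machines that simulate stack machines -/

namespace CommIsom
open Relation Turing.PartrecToTM2 Function

/-- The digit in base `5` that codes a stack symbol; `0` stands for an empty stack. -/
def digit : Option Γ' → ℕ
  | none => 0
  | some .consₗ => 1
  | some .cons => 2
  | some .bit0 => 3
  | some .bit1 => 4

lemma digit_lt (o : Option Γ') : digit o < 5 := by
  rcases o with _ | _ | _ | _ | _ <;> decide

lemma digit_inj {o o' : Option Γ'} (h : digit o = digit o') : o = o' := by
  rcases o with _ | _ | _ | _ | _ <;> rcases o' with _ | _ | _ | _ | _ <;>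
    first | rfl | exact absurd h (by decide)

/-- The number whose base `5` digits, starting with the lowest, are the symbols of a stack. -/
def encS : List Γ' → ℕ
  | [] => 0
  | x :: l => digit (some x) + 5 * encS l

lemma encS_append (l l' : List Γ') : encS (l ++ l') = encS l + 5 ^ l.length * encS l' := by
  induction l with
  | nil => simp [encS]
  | cons x l ih => simp only [List.cons_append, encS, ih, List.length_cons]; ring

lemma encS_lt (l : List Γ') : encS l < 5 ^ l.length := by
  induction l with
  | nil => simp [encS]
  | cons x l ih =>
    have := digit_lt (some x)
    simp only [encS, List.length_cons, pow_succ]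
    omega

lemma encS_head (l : List Γ') : encS l = digit l.head? + 5 * encS l.tail := by
  cases l <;> simp [encS, digit]

/-- The coordinate that holds a stack; coordinate `0` holds the state. -/
def idx : K' → Fin 5
  | .main => 1
  | .rev => 2
  | .aux => 3
  | .stack => 4

lemma idx_ne (k : K') : idx k ≠ 0 := by cases k <;> decide

/-- The rule for an instruction in state `q` that replaces the top symbol `o` of the stack `k`
(`o = none` if the stack is empty) by the word `w` and changes the state to `q'`. The states are
numbers less than `S`. -/
def mkRule (S : ℕ) (hS : 0 < S) (q : ℕ) (k : K') (o : Option Γ') (w : List Γ') (q' : ℕ) : Rule where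
  m j := if j = 0 then S else if j = idx k then 5 else 1
  r j := if j = 0 then q else if j = idx k then digit o else 0
  a j := if j = 0 then S else if j = idx k then 5 ^ w.length else 1
  c j := if j = 0 then q' else if j = idx k then encS w else 0
  hm j := by split_ifs <;> omega
  ha j := by split_ifs <;> first | omega | positivity

section
variable {A : Type} (instr : A → Option (K' × (Option Γ' → List Γ' × A)))

/-- One step of the stack machine with states `A` and instructions `instr`. An instruction
`(k, F)` replaces the top symbol `o` of the stack `k` by the word `(F o).1` and changes the state
to `(F o).2`. -/
def SStep (c c' : A × (K' → List Γ')) : Prop :=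
  ∃ k F, instr c.1 = some (k, F) ∧
    c' = ((F (c.2 k).head?).2, update c.2 k ((F (c.2 k).head?).1 ++ (c.2 k).tail))

open Classical in
/-- The number of a state, given a list of states. -/
noncomputable def num (T : List A) (q : A) : ℕ := T.idxOf q

/-- The vector that codes a configuration. -/
noncomputable def encC (T : List A) (c : A × (K' → List Γ')) : Fin 5 → ℕ :=
  ![num T c.1, encS (c.2 .main), encS (c.2 .rev), encS (c.2 .aux), encS (c.2 .stack)]

/-- The rules of a stack machine with the states `T`. -/
noncomputable def mkRules (T : List A) : List Rule :=
  T.flatMap fun q => match instr q with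
    | none => []
    | some (k, F) => [none, some .consₗ, some .cons, some .bit0, some .bit1].map fun o =>
      mkRule (T.length + 1) (Nat.succ_pos _) (num T q) k o (F o).1 (num T (F o).2)

lemma mem_mkRules (T : List A) (R : Rule) : R ∈ mkRules instr T ↔
    ∃ q ∈ T, ∃ k F, instr q = some (k, F) ∧ ∃ o,
      R = mkRule (T.length + 1) (Nat.succ_pos _) (num T q) k o (F o).1 (num T (F o).2) := by
  unfold mkRules
  rw [List.mem_flatMap]
  refine exists_congr fun q => and_congr_right fun _ => ?_
  cases h : instr q with
  | none => simp
  | some p =>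
    obtain ⟨k, F⟩ := p
    simp only [List.mem_map, Option.some.injEq, Prod.mk.injEq]
    constructor
    · rintro ⟨o, -, rfl⟩
      exact ⟨k, F, ⟨rfl, rfl⟩, o, rfl⟩
    · rintro ⟨k', F', ⟨rfl, rfl⟩, o, rfl⟩
      refine ⟨o, ?_, rfl⟩
      rcases o with _ | _ | _ | _ | _ <;> simp

lemma num_lt (T : List A) (q : A) : num T q < T.length + 1 :=
  by
  classical
  exact Nat.lt_succ_of_le List.idxOf_le_length

lemma num_inj {T : List A} {q q' : A} (h : q ∈ T) (e : num T q = num T q') : q = q' := by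
  classical
  unfold num at e
  exact (List.idxOf_inj h).1 e

variable {instr} {T : List A}

/-- The state and the top symbol can be read off from the residues. -/
lemma step_residue {q q' : A} (hq : q ∈ T) {k k' : K'} {F F'} (h : instr q = some (k, F))
    (h' : instr q' = some (k', F')) {o o' : Option Γ'} {w w'} {p p'} {u u' : Fin 5 → ℕ}
    (e : (mkRule (T.length + 1) (Nat.succ_pos _) (num T q) k o w p).r +
        (mkRule (T.length + 1) (Nat.succ_pos _) (num T q) k o w p).m * u =
      (mkRule (T.length + 1) (Nat.succ_pos _) (num T q') k' o' w' p').r +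
        (mkRule (T.length + 1) (Nat.succ_pos _) (num T q') k' o' w' p').m * u') :
    k = k' ∧ F = F' ∧ o = o' ∧ u = u' := by
  have e0 := congrFun e 0
  simp only [mkRule, Pi.add_apply, Pi.mul_apply, if_true] at e0
  have n0 : num T q = num T q' := by
    have := congrArg (· % (T.length + 1)) e0
    simpa [Nat.add_mul_mod_self_left, Nat.mod_eq_of_lt (num_lt _ _)] using this
  obtain rfl := num_inj hq n0
  rw [h] at h'
  obtain ⟨rfl, rfl⟩ : k = k' ∧ F = F' := by simpa using h'
  have e1 := congrFun e (idx k)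
  simp only [mkRule, Pi.add_apply, Pi.mul_apply, if_true, if_neg (idx_ne k)] at e1
  have o0 : o = o' := digit_inj (by
    have h1 := digit_lt o
    have h2 := digit_lt o'
    omega)
  subst o0
  refine ⟨rfl, rfl, rfl, ?_⟩
  funext j
  have ej := congrFun e j
  simp only [mkRule, Pi.add_apply, Pi.mul_apply] at ej
  refine Nat.eq_of_mul_eq_mul_left ?_ (Nat.add_left_cancel ej)
  split_ifs <;> omega

variable {D : Machine}

lemma step_iff (hD : D.rules = mkRules instr T)
    (α β : Fin 5 → ℕ) : D.Step α β ↔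
    ∃ q ∈ T, ∃ k F, instr q = some (k, F) ∧ ∃ o u,
      α = (mkRule (T.length + 1) (Nat.succ_pos _) (num T q) k o (F o).1 (num T (F o).2)).r +
        (mkRule (T.length + 1) (Nat.succ_pos _) (num T q) k o (F o).1 (num T (F o).2)).m * u ∧
      β = (mkRule (T.length + 1) (Nat.succ_pos _) (num T q) k o (F o).1 (num T (F o).2)).c +
        (mkRule (T.length + 1) (Nat.succ_pos _) (num T q) k o (F o).1 (num T (F o).2)).a * u := by
  constructor
  · rintro ⟨i, u, rfl, rfl⟩
    have : D.rules[i] ∈ mkRules instr T := hD ▸ List.getElem_mem _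
    obtain ⟨q, hq, k, F, h, o, e⟩ := (mem_mkRules instr T _).1 this
    exact ⟨q, hq, k, F, h, o, u, by rw [e], by rw [e]⟩
  · rintro ⟨q, hq, k, F, h, o, u, rfl, rfl⟩
    have := (mem_mkRules instr T _).2 ⟨q, hq, k, F, h, o, rfl⟩
    rw [← hD] at this
    obtain ⟨i, hi, e⟩ := List.getElem_of_mem this
    refine ⟨⟨i, hi⟩, u, ?_, ?_⟩
    · rw [← e]; rfl
    · rw [← e]; rfl

lemma rules_lt (hD : D.rules = mkRules instr T)
    (i : Fin D.rules.length) (j : Fin 5) : D.rules[i].r j < D.rules[i].m j ∧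
    D.rules[i].c j < D.rules[i].a j := by
  have : D.rules[i] ∈ mkRules instr T := hD ▸ List.getElem_mem _
  obtain ⟨q, hq, k, F, h, o, e⟩ := (mem_mkRules instr T _).1 this
  rw [e]
  constructor
  · simp only [mkRule]
    split_ifs
    · exact num_lt _ _
    · exact digit_lt _
    · exact one_pos
  · simp only [mkRule]
    split_ifs
    · exact num_lt _ _
    · exact encS_lt _
    · exact one_pos

lemma step_det (hD : D.rules = mkRules instr T)
    (α β γ : Fin 5 → ℕ) (h : D.Step α β) (h' : D.Step α γ) : β = γ := by
  obtain ⟨q, hq, k, F, hk, o, u, rfl, rfl⟩ := (step_iff hD _ _).1 h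
  obtain ⟨q', hq', k', F', hk', o', u', e, rfl⟩ := (step_iff hD _ _).1 h'
  obtain ⟨rfl, rfl, rfl, rfl⟩ := step_residue hq hk hk' e
  rfl

/-- A configuration without an instruction is terminal. -/
lemma not_step_of_halt (hD : D.rules = mkRules instr T)
    {c : A × (K' → List Γ')} (hc : c.1 ∈ T) (h : instr c.1 = none) (β) :
    ¬ D.Step (encC T c) β := by
  intro hs
  obtain ⟨q, hq, k, F, hk, o, u, e, -⟩ := (step_iff hD _ _).1 hs
  have e0 := congrFun e 0
  simp only [mkRule, Pi.add_apply, Pi.mul_apply, if_true] at e0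
  have n0 : num T c.1 = num T q := by
    have := congrArg (· % (T.length + 1)) e0
    simpa [encC, Nat.add_mul_mod_self_left, Nat.mod_eq_of_lt (num_lt _ _)] using this
  rw [num_inj hc n0, hk] at h
  exact Option.some_ne_none _ h

/-- The modular machine carries out the steps of the stack machine. -/
lemma step_of_sstep (hD : D.rules = mkRules instr T)
    {c c' : A × (K' → List Γ')} (hc : c.1 ∈ T) (h : SStep instr c c') :
    D.Step (encC T c) (encC T c') := by
  obtain ⟨k, F, hk, rfl⟩ := h
  obtain ⟨q, S⟩ := c
  refine (step_iff hD _ _).2 ⟨q, hc, k, F, hk, (S k).head?, fun j => if j = 0 then 0 else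
    if j = idx k then encS (S k).tail else encC T (q, S) j, ?_, ?_⟩
  · funext j
    have := encS_head (S k)
    cases k <;> fin_cases j <;> simp [encC, mkRule, idx, this]
  · funext j
    have := encS_append (F (S k).head?).1 (S k).tail
    cases k <;> fin_cases j <;> simp [encC, mkRule, idx, this]

lemma reach_of_sreach (hD : D.rules = mkRules instr T)
    (hT : ∀ q ∈ T, ∀ k F, instr q = some (k, F) → ∀ o, (F o).2 ∈ T)
    {c c' : A × (K' → List Γ')} (hc : c.1 ∈ T)
    (h : ReflTransGen (SStep instr) c c') : ReflTransGen D.Step (encC T c) (encC T c') := by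
  induction h using ReflTransGen.head_induction_on with
  | refl => exact .refl
  | head h _ ih =>
    refine .head (step_of_sstep hD hc h) (ih ?_)
    obtain ⟨k, F, hk, rfl⟩ := h
    exact hT _ hc _ _ hk _

/-- Every run of the modular machine that starts at the code of a configuration comes from a run
of the stack machine, by determinism. -/
lemma sreach_of_reach (hD : D.rules = mkRules instr T)
    (hT : ∀ q ∈ T, ∀ k F, instr q = some (k, F) → ∀ o, (F o).2 ∈ T)
    {c : A × (K' → List Γ')} (hc : c.1 ∈ T) {β}
    (h : ReflTransGen D.Step (encC T c) β) :
    ∃ c', c'.1 ∈ T ∧ ReflTransGen (SStep instr) c c' ∧ β = encC T c' := by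
  induction h with
  | refl => exact ⟨c, hc, .refl, rfl⟩
  | tail _ h ih =>
    obtain ⟨c', hc', r, rfl⟩ := ih
    cases hi : instr c'.1 with
    | none => exact absurd h (not_step_of_halt hD hc' hi _)
    | some p =>
      obtain ⟨k, F⟩ := p
      have hs : SStep instr c' _ := ⟨k, F, hi, rfl⟩
      exact ⟨_, hT _ hc' _ _ hi _, r.tail hs, step_det hD _ _ _ h (step_of_sstep hD hc' hs)⟩

end

end CommIsom

/-! ### Stack machines that simulate partial recursive functions -/

namespace CommIsom
open Relation Turing Turing.PartrecToTM2 Function StateTransition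

/-- Statements of Mathlib's stack Turing machines for partial recursive functions. -/
abbrev St : Type := TM2.Stmt (fun _ : K' => Γ') Λ' (Option Γ')

/-- The instruction that executes the outermost constructor of a statement; the states are
statements together with the content of the local store. -/
def tmInstr : St × Option Γ' → Option (K' × (Option Γ' → List Γ' × (St × Option Γ')))
  | (.push k f q, v) => some (k, fun o => (f v :: o.toList, (q, v)))
  | (.peek k f q, v) => some (k, fun o => (o.toList, (q, f v o)))
  | (.pop k f q, v) => some (k, fun o => ([], (q, f v o)))
  | (.load f q, v) => some (.main, fun o => (o.toList, (q, f v)))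
  | (.branch f q₁ q₂, v) => some (.main, fun o => (o.toList, (cond (f v) q₁ q₂, v)))
  | (.goto f, v) => some (.main, fun o => (o.toList, (tr (f v), v)))
  | (.halt, _) => none

lemma toList_head_append (l : List Γ') : l.head?.toList ++ l.tail = l := by cases l <;> rfl

/-- The configuration of the stack machine for a configuration of the Turing machine. -/
def toM (c : TM2.Cfg (fun _ : K' => Γ') Λ' (Option Γ')) :
    (St × Option Γ') × (K' → List Γ') :=
  ((c.l.elim .halt tr, c.var), c.stk)

/-- Mathlib's `TM2.stepAux` runs a whole statement at once; the stack machine does it one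
constructor at a time. -/
lemma sreach_stepAux (q : St) (v : Option Γ') (S : K' → List Γ') :
    ReflTransGen (SStep tmInstr) ((q, v), S) (toM (TM2.stepAux q v S)) := by
  induction q generalizing v S with
  | push k f q ih =>
    refine .head ⟨k, _, rfl, rfl⟩ ?_
    rw [TM2.stepAux]
    simpa only [List.cons_append, toList_head_append] using ih v (update S k (f v :: S k))
  | peek k f q ih =>
    refine .head ⟨k, _, rfl, rfl⟩ ?_
    rw [TM2.stepAux]
    simpa only [toList_head_append, update_eq_self] using ih (f v (S k).head?) S
  | pop k f q ih =>
    refine .head ⟨k, _, rfl, rfl⟩ ?_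
    rw [TM2.stepAux]
    simpa only [List.nil_append] using ih (f v (S k).head?) (update S k (S k).tail)
  | load f q ih =>
    refine .head ⟨.main, _, rfl, rfl⟩ ?_
    rw [TM2.stepAux]
    simpa only [toList_head_append, update_eq_self] using ih (f v) S
  | branch f q₁ q₂ ih₁ ih₂ =>
    refine .head ⟨.main, _, rfl, rfl⟩ ?_
    simp only [toList_head_append, update_eq_self, TM2.stepAux]
    cases f v
    · exact ih₂ v S
    · exact ih₁ v S
  | goto f =>
    refine .head ⟨.main, _, rfl, rfl⟩ ?_
    simp only [toList_head_append, update_eq_self, TM2.stepAux]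
    exact .refl
  | halt => exact .refl

/-- The stack machine simulates the Turing machine. -/
lemma sreach_of_tm {c c'} (h : Reaches (TM2.step tr) c c') :
    ReflTransGen (SStep tmInstr) (toM c) (toM c') := by
  induction h with
  | refl => exact .refl
  | @tail c₁ c₂ _ h ih =>
    refine ih.trans ?_
    obtain ⟨l, v, S⟩ := c₁
    cases l with
    | none => cases h
    | some l =>
      obtain rfl := Option.some.inj h
      exact sreach_stepAux _ _ _

/-- Conversely, if the stack machine halts, then so does the Turing machine. -/
lemma dom_of_sreach {c c' : (St × Option Γ') × (K' → List Γ')}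
    (h : ReflTransGen (SStep tmInstr) c c') (hc' : c'.1.1 = .halt) :
    (eval (TM2.step tr) (TM2.stepAux c.1.1 c.1.2 c.2)).Dom := by
  induction h using ReflTransGen.head_induction_on with
  | refl =>
    obtain ⟨⟨q, v⟩, S⟩ := c'
    subst hc'
    exact Part.dom_iff_mem.2 ⟨_, mem_eval.2 ⟨.refl, rfl⟩⟩
  | @head a b h _ ih =>
    obtain ⟨⟨q, v⟩, S⟩ := a
    obtain ⟨k, F, hk, rfl⟩ := h
    cases q with
    | goto f =>
      obtain ⟨rfl, rfl⟩ : K'.main = k ∧ _ = F := by simpa [tmInstr] using hk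
      simp only [toList_head_append, update_eq_self] at ih
      rw [TM2.stepAux]
      have hs : Reaches (TM2.step tr) ⟨some (f v), v, S⟩ (TM2.stepAux (tr (f v)) v S) :=
        .single rfl
      rwa [reaches_eval hs]
    | halt => simp [tmInstr] at hk
    | branch f q₁ q₂ =>
      obtain ⟨rfl, rfl⟩ : K'.main = k ∧ _ = F := by simpa [tmInstr] using hk
      simp only [toList_head_append, update_eq_self] at ih
      rw [TM2.stepAux]
      cases hf : f v <;> rw [hf] at ih <;> exact ih
    | push k' f q =>
      obtain ⟨rfl, rfl⟩ : k' = k ∧ _ = F := by simpa [tmInstr] using hk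
      rw [TM2.stepAux]
      simpa only [List.cons_append, toList_head_append] using ih
    | peek k' f q =>
      obtain ⟨rfl, rfl⟩ : k' = k ∧ _ = F := by simpa [tmInstr] using hk
      rw [TM2.stepAux]
      simpa only [toList_head_append, update_eq_self] using ih
    | pop k' f q =>
      obtain ⟨rfl, rfl⟩ : k' = k ∧ _ = F := by simpa [tmInstr] using hk
      rw [TM2.stepAux]
      simpa only [List.nil_append] using ih
    | load f q =>
      obtain ⟨rfl, rfl⟩ : K'.main = k ∧ _ = F := by simpa [tmInstr] using hk
      rw [TM2.stepAux]
      simpa only [toList_head_append, update_eq_self] using ih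

/-- A finite set of states that is closed under the instructions. -/
lemma exists_states (c : ToPartrec.Code) : ∃ T : List (St × Option Γ'),
    (∀ q ∈ T, ∀ k F, tmInstr q = some (k, F) → ∀ o, (F o).2 ∈ T) ∧
    (∀ v, (⟨.halt, v⟩ : St × Option Γ') ∈ T) ∧ ∀ v, (⟨tr (trNormal c .halt), v⟩ : St × Option Γ') ∈ T := by
  classical
  let Λs := codeSupp c .halt
  let Q : Finset St := insert .halt (Λs.biUnion fun l => TM2.stmts₁ (tr l))
  have hsup : ∀ l ∈ Λs, TM2.SupportsStmt Λs (tr l) := (tr_supports c .halt).2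
  have hQ : ∀ q ∈ Q, TM2.SupportsStmt Λs q ∧ TM2.stmts₁ q ⊆ Q := by
    intro q hq
    rcases Finset.mem_insert.1 hq with rfl | hq
    · exact ⟨trivial, by simp [TM2.stmts₁, Q]⟩
    · obtain ⟨l, hl, hq⟩ := Finset.mem_biUnion.1 hq
      refine ⟨TM2.stmts₁_supportsStmt_mono hq (hsup l hl), fun x hx => ?_⟩
      exact Finset.mem_insert_of_mem (Finset.mem_biUnion.2 ⟨l, hl, TM2.stmts₁_trans hq hx⟩)
  have htr : ∀ l ∈ Λs, tr l ∈ Q := fun l hl =>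
    Finset.mem_insert_of_mem (Finset.mem_biUnion.2 ⟨l, hl, TM2.stmts₁_self⟩)
  refine ⟨(Q ×ˢ Finset.univ).toList, ?_, fun v => ?_, fun v => ?_⟩
  · rintro ⟨q, v⟩ hq k F h o
    simp only [Finset.mem_toList, Finset.mem_product, Finset.mem_univ, and_true] at hq ⊢
    obtain ⟨h1, h2⟩ := hQ q hq
    have sub : ∀ q', q' ∈ TM2.stmts₁ q → q' ∈ Q := fun q' hq' => h2 hq'
    cases q <;> simp only [tmInstr, Option.some.injEq, Prod.mk.injEq, reduceCtorEq] at h <;>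
      obtain ⟨rfl, rfl⟩ := h
    case goto f => exact htr _ (h1 v)
    case branch f q₁ q₂ =>
      refine sub _ ?_
      simp only [TM2.stmts₁, Finset.mem_insert, Finset.mem_union]
      cases f v
      · exact .inr (.inr TM2.stmts₁_self)
      · exact .inr (.inl TM2.stmts₁_self)
    all_goals
      refine sub _ ?_
      simp only [TM2.stmts₁, Finset.mem_insert]
      exact .inr TM2.stmts₁_self
  · simp [Q]
  · simp only [Finset.mem_toList, Finset.mem_product, Finset.mem_univ, and_true]
    refine htr _ ?_
    exact codeSupp_self c .halt (trStmts₁_self _)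

/-- The code of the input `2 ^ n` on the main stack. -/
def inp : ℕ → ℕ
  | 0 => digit (some .bit1) + 5 * digit (some .cons)
  | n + 1 => digit (some .bit0) + 5 * inp n

/-- Powers of two are used as inputs because of their simple binary expansions. -/
lemma encS_trList (n : ℕ) : encS (trList [2 ^ n]) = inp n := by
  let p : ℕ → PosNum := fun n => Nat.rec PosNum.one (fun _ q => PosNum.bit0 q) n
  have hp : ∀ n, castPosNum (p n) = 2 ^ n := by
    intro n
    induction n with
    | zero => rfl
    | succ n ih =>
      change castPosNum (PosNum.bit0 (p n)) = _
      rw [PosNum.cast_bit0, ih]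
      ring
  have hN : ∀ n, ((2 ^ n : ℕ) : Num) = .pos (p n) := fun n => by
    rw [← hp n]
    exact Num.of_to_nat (.pos (p n))
  have : ∀ n, encS (trPosNum (p n) ++ [Γ'.cons]) = inp n := by
    intro n
    induction n with
    | zero => rfl
    | succ n ih => exact congrArg (fun t => digit (some .bit0) + 5 * t) ih
  rw [← this n]
  simp only [trList, trNat]
  rw [hN]
  rfl

/-- For every partial recursive function `f` with values in `{0}`, there is a machine which on
input `n` reaches `g0` if and only if `f (2 ^ n)` is defined; if it is undefined, then this is
witnessed by an invariant. -/
lemma exists_machine {f : ℕ →. ℕ} (hf : Nat.Partrec f) (hf0 : ∀ n, ∀ x ∈ f n, x = 0) :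
    ∃ D : Machine, (∃ C : Fin 5 → ℕ, ∀ n, D.g n = fun j => if j = 1 then inp n else C j) ∧
      (∀ n, (f (2 ^ n)).Dom → ReflTransGen D.Step (D.g n) D.g0) ∧
      ∀ n, ¬ (f (2 ^ n)).Dom → ∃ χ : (Fin 5 → ℤ) → ZMod 2, χ (zv D.g0) = 0 ∧ χ (zv (D.g n)) = 1 ∧
      ∀ (i : Fin D.rules.length) (u : Fin 5 → ℤ),
        χ (zv D.rules[i].r + zv D.rules[i].m * u) =
          χ (zv D.rules[i].c + zv D.rules[i].a * u) := by
  obtain ⟨c, hc⟩ := ToPartrec.Code.exists_code (Nat.Partrec'.part_iff₁.2 (Partrec.nat_iff.2 hf))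
  replace hc : ∀ n, c.eval [n] = pure <$> f n := fun n => hc (n ::ᵥ .nil)
  obtain ⟨T, hT, hh, hs⟩ := exists_states c
  let st : ℕ → (St × Option Γ') × (K' → List Γ') := fun n => toM (init c [2 ^ n])
  have hst : ∀ n, (st n).1 ∈ T := fun n => hs none
  -- as `f` only takes the value `0`, there is a single halting configuration
  let fin : (St × Option Γ') × (K' → List Γ') := toM (halt [0])
  let D : Machine := ⟨mkRules tmInstr T, encC T fin, fun n => encC T (st n)⟩
  have hD : D.rules = mkRules tmInstr T := rfl
  have hev := fun n => tr_eval c [2 ^ n]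
  refine ⟨D, ⟨fun j => encC T (st 0) j, fun n => ?_⟩, fun n hn => ?_, fun n hn => ?_⟩
  · funext j
    have : encS (trList [2 ^ n]) = inp n := encS_trList n
    fin_cases j
    · rfl
    · exact this
    · rfl
    · rfl
    · rfl
  · refine reach_of_sreach hD hT (hst n) (sreach_of_tm ?_)
    refine (mem_eval.1 ?_).1
    rw [hev, hc]
    obtain ⟨x, hx⟩ := Part.dom_iff_mem.1 hn
    obtain rfl := hf0 _ x hx
    exact Part.mem_map _ (Part.mem_map _ hx)
  · refine exists_invariant D n (rules_lt hD) (step_det hD)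
      (not_step_of_halt hD (hh _) rfl) fun hr => hn ?_
    obtain ⟨c', hc', r, e⟩ := sreach_of_reach hD hT (hst n) hr
    have e' : c'.1 = (.halt, none) := by
      have : num T (.halt, none) = num T c'.1 := congrFun e 0
      exact (num_inj (hh none) this).symm
    have hdom := dom_of_sreach r (by rw [e'])
    have hs : Reaches (TM2.step tr) (init c [2 ^ n])
        (TM2.stepAux (tr (trNormal c .halt)) none (K'.elim (trList [2 ^ n]) [] [] [])) :=
      .single rfl
    have hdom' : (eval (TM2.step tr) (init c [2 ^ n])).Dom := by
      rw [reaches_eval hs]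
      exact hdom
    rw [hev, hc] at hdom'
    exact hdom'

end CommIsom

/-! ### Computability of the presentations -/

namespace CommIsom
open Relation

section
variable {α : Type} [Primcodable α]

lemma primrec_wpow {f g : α → ℕ} (hf : Primrec f) (hg : Primrec g) :
    Primrec fun x => wpow (f x) (g x) := by
  have : Primrec fun x => (List.range (g x)).map fun _ => (f x, true) :=
    .list_map (Primrec.list_range.comp hg)
      ((hf.comp .fst).pair (.const true) : Primrec fun p : α × ℕ => (f p.1, true)).to₂
  exact this.of_eq fun x => by simp [wpow]

lemma primrec_winv {f : α → List (ℕ × Bool)} (hf : Primrec f) : Primrec fun x => winv (f x) := by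
  have hs : Primrec fun p : ℕ × Bool => (p.1, !p.2) := Primrec.fst.pair (Primrec.not.comp .snd)
  exact Primrec.list_reverse.comp (.list_map hf (hs.comp .snd).to₂)

lemma primrec_app {β : Type} [Primcodable β] {f g : α → List β} (hf : Primrec f)
    (hg : Primrec g) : Primrec fun x => f x ++ g x := Primrec.list_append.comp hf hg

lemma primrec_eqw {f g : α → List (ℕ × Bool)} (hf : Primrec f) (hg : Primrec g) :
    Primrec fun x => eqw (f x) (g x) := primrec_app hf (primrec_winv hg)

lemma primrec_xww {f : α → Fin 5 → ℕ} (hf : ∀ j, Primrec fun x => f x j) :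
    Primrec fun x => xww (f x) :=
  primrec_app (primrec_app (primrec_app (primrec_app (primrec_wpow (.const 5) (hf 0))
    (primrec_wpow (.const 6) (hf 1))) (primrec_wpow (.const 7) (hf 2)))
    (primrec_wpow (.const 8) (hf 3))) (primrec_wpow (.const 9) (hf 4))

lemma primrec_tcw {f : α → Fin 5 → ℕ} (hf : ∀ j, Primrec fun x => f x j) :
    Primrec fun x => tcw (f x) :=
  primrec_app (primrec_app (primrec_winv (primrec_xww hf)) (.const _)) (primrec_xww hf)

lemma primrec_relG {f : α → Fin 5 → ℕ} (hf : ∀ j, Primrec fun x => f x j) :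
    Primrec fun x => relG (f x) :=
  primrec_eqw (primrec_app (.const _) (primrec_tcw hf))
    (primrec_app (.const _) (primrec_app (primrec_tcw hf) (.const _)))

lemma primrec_relV {f : α → ℕ} (hf : Primrec f) : Primrec fun x => relV (f x) :=
  .ite (Primrec.eq.comp hf (.const 0)) (.const _)
    (.ite (Primrec.eq.comp hf (.const 1)) (.const _) (.const _))

lemma primrec_comw {f g : α → ℕ} (hf : Primrec f) (hg : Primrec g) :
    Primrec fun x => comw (f x) (g x) := by
  have h1 := primrec_wpow hf (.const 1)
  have h2 := primrec_wpow hg (.const 1)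
  exact primrec_eqw (primrec_app h1 h2) (primrec_app h2 h1)

lemma primrec_relC {f g : α → ℕ} (hf : Primrec f) (hg : Primrec g) :
    Primrec fun x => relC (f x) (g x) :=
  .list_map (Primrec.list_range.comp hf) (primrec_comw (hg.comp .fst) .snd).to₂

end

lemma primrec_inp : Primrec inp := by
  have : Primrec fun n : ℕ => (n.rec (digit (some .bit1) + 5 * digit (some .cons))
      fun _ r => digit (some .bit0) + 5 * r : ℕ) :=
    Primrec.nat_rec₁ _ (Primrec.nat_add.comp (.const _)
      (Primrec.nat_mul.comp (.const 5) .snd)).to₂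
  exact this.of_eq fun n => by
    induction n with
    | zero => rfl
    | succ n ih => simp only [inp, ← ih]

/-- The sequence of presentations is computable: only the starting vector `D.g` and the number of
generators depend on the input. -/
lemma primrec_pcode (D : Machine) (C : Fin 5 → ℕ)
    (hC : ∀ n, D.g n = fun j => if j = 1 then inp n else C j) :
    Primrec fun i : ℕ => pcode D (i / 2) (i % 2) := by
  have hn : Primrec fun i : ℕ => i / 2 := Primrec.nat_div.comp .id (.const 2)
  have hv : Primrec fun i : ℕ => i % 2 := Primrec.nat_mod.comp .id (.const 2)
  have hN : Primrec fun i : ℕ => D.N (i / 2) := Primrec.nat_add.comp (.const _) hn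
  have hg : ∀ j, Primrec fun i : ℕ => D.g (i / 2) j := fun j => by
    simp only [hC]
    by_cases hj : j = 1
    · simp only [hj, if_true]
      exact primrec_inp.comp hn
    · simp only [hj, if_false]
      exact .const _
  refine hN.pair (primrec_app (.const _) (primrec_app ?_ (primrec_app (primrec_relC hN (.const 0))
    (primrec_app (primrec_relC hN (.const 1)) (.list_flatMap (Primrec.list_range.comp hn) ?_)))))
  · exact Primrec.list_cons.comp (primrec_relV hv)
      (Primrec.list_cons.comp (primrec_relG hg) (.const []))
  · exact (primrec_relC (hN.comp .fst) (Primrec.nat_add.comp (.const _) .snd)).to₂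

/-- A partial recursive function whose domain, restricted to the powers `2 ^ k`, is the halting
set. -/
lemma exists_halting_function : ∃ f : ℕ →. ℕ, Nat.Partrec f ∧ (∀ n, ∀ x ∈ f n, x = 0) ∧
    ∀ k, (f (2 ^ k)).Dom ↔ (Nat.Partrec.Code.eval (Denumerable.ofNat Nat.Partrec.Code k) 0).Dom := by
  let lg : ℕ →. ℕ := fun m => Nat.rfind fun k => Part.some (decide (2 ^ k = m))
  let f : ℕ →. ℕ := fun m => (lg m).bind fun k =>
    (Nat.Partrec.Code.eval (Denumerable.ofNat Nat.Partrec.Code k) 0).map fun _ => 0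
  have hpow : Primrec fun k : ℕ => 2 ^ k := by
    have : Primrec fun n : ℕ => (n.rec 1 fun _ r => 2 * r : ℕ) :=
      Primrec.nat_rec₁ _ (Primrec.nat_mul.comp (.const 2) .snd).to₂
    exact this.of_eq fun n => by
      induction n with
      | zero => rfl
      | succ n ih => simp only [ih]; ring
  have hlg : Partrec lg := by
    have hd : Primrec fun p : ℕ × ℕ => decide (2 ^ p.2 = p.1) :=
      (Primrec.eq.comp (hpow.comp .snd) .fst).decide
    exact Partrec.rfind hd.to_comp.partrec.to₂
  have hf : Partrec f := by
    refine hlg.bind ?_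
    have h1 : Partrec fun p : ℕ × ℕ =>
        Nat.Partrec.Code.eval (Denumerable.ofNat Nat.Partrec.Code p.2) 0 :=
      Nat.Partrec.Code.eval_part.comp ((Computable.ofNat _).comp .snd) (.const 0)
    exact (h1.map (Computable.const 0).to₂).to₂
  have hval : ∀ k, lg (2 ^ k) = Part.some k := by
    intro k
    refine Part.eq_some_iff.2 (Nat.mem_rfind.2 ⟨by simp, fun {m} hm => ?_⟩)
    have : 2 ^ m ≠ 2 ^ k := fun h => hm.ne (Nat.pow_right_injective le_rfl h)
    simp [this]
  refine ⟨f, Partrec.nat_iff.1 hf, fun n x hx => ?_, fun k => ?_⟩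
  · obtain ⟨k, -, hk⟩ := Part.mem_bind_iff.1 hx
    obtain ⟨-, -, h⟩ := (Part.mem_map_iff _).1 hk
    exact h.symm
  · simp only [f]
    rw [hval, Part.bind_some]
    rfl

end CommIsom

/-- There is a recursively enumerable class of finite presentations of groups within which
the commensurability problem is solvable but the isomorphism problem is unsolvable. -/
theorem exists_class_comm_solvable_isom_unsolvable :
    ∃ P : ℕ → ℕ × List (List (ℕ × Bool)), Computable P ∧
      (∃ d : ℕ × ℕ → Bool, Computable d ∧
        ∀ i j : ℕ, d (i, j) = true ↔ GroupCommensurable (codeGroup (P i)) (codeGroup (P j))) ∧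
      ¬ ∃ e : ℕ × ℕ → Bool, Computable e ∧
        ∀ i j : ℕ, e (i, j) = true ↔ Nonempty (codeGroup (P i) ≃* codeGroup (P j)) := by
  obtain ⟨f, hf, hf0, hdom⟩ := CommIsom.exists_halting_function
  obtain ⟨D, ⟨C, hC⟩, hreach, hinv⟩ := CommIsom.exists_machine hf hf0
  have hpar : ∀ i : ℕ, i % 2 = 0 ∨ i % 2 = 1 := fun i => by omega
  refine ⟨fun i => CommIsom.pcode D (i / 2) (i % 2), (CommIsom.primrec_pcode D C hC).to_comp,
    ⟨fun p => decide (p.1 / 2 = p.2 / 2), ?_, fun i j => ?_⟩, ?_⟩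
  · have h2 : Primrec fun i : ℕ => i / 2 := Primrec.nat_div.comp .id (.const 2)
    exact (Primrec.eq.comp (h2.comp .fst) (h2.comp .snd)).decide.to_comp
  · have hi := CommIsom.isPres_pcode D (i / 2) (i % 2) (by omega)
    have hj := CommIsom.isPres_pcode D (j / 2) (j % 2) (by omega)
    rw [decide_eq_true_iff]
    constructor
    · intro h
      change i / 2 = j / 2 at h
      revert hj
      beta_reduce
      rw [← h]
      intro hj
      exact hi.commensurable (hpar i) (CommIsom.isPres_pcode D (i / 2) 2 le_rfl) hj (hpar j)
    · exact hi.eq_of_commensurable (by omega) hj (by omega)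
  · rintro ⟨e, he, heq⟩
    have key : ∀ n, e (2 * n, 2 * n + 1) = true ↔ (f (2 ^ n)).Dom := by
      intro n
      rw [heq]
      beta_reduce
      rw [show 2 * n / 2 = n by omega, show (2 * n + 1) / 2 = n by omega,
        show 2 * n % 2 = 0 by omega, show (2 * n + 1) % 2 = 1 by omega]
      have I0 := CommIsom.isPres_pcode D n 0 (by omega)
      have I1 := CommIsom.isPres_pcode D n 1 (by omega)
      have I2 := CommIsom.isPres_pcode D n 2 le_rfl
      refine ⟨fun h => ?_, fun h => I0.nonempty_equiv I1 (hreach n h)⟩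
      by_contra hn
      -- `b` is nontrivial in version `2`, hence also in version `0`
      obtain ⟨χ, h0, h1, h2⟩ := hinv n hn
      obtain ⟨Q, _, h', S, hb⟩ := CommIsom.exists_sat D n χ h0 h1 h2
      refine I0.not_equiv ?_ I1 h
      have hlt : 1 < D.N n := by unfold CommIsom.Machine.N; omega
      obtain ⟨φ, hφ⟩ := I2.univ Q h' S
      obtain ⟨ψ, hψ, hψ1, -⟩ := I0.exists_embedding (Or.inl rfl) I2
      rw [← hψ1]
      intro hone
      apply hb
      rw [← hφ 1 hlt, hψ (hone.trans (map_one ψ).symm), map_one]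
    refine ComputablePred.halting_problem 0 (ComputablePred.computable_iff.2
      ⟨fun c => e (2 * Encodable.encode c, 2 * Encodable.encode c + 1), ?_, ?_⟩)
    · have h2 : Computable fun c : Nat.Partrec.Code => 2 * Encodable.encode c :=
        (Primrec.nat_mul.comp (.const 2) .encode).to_comp
      exact he.comp (h2.pair (Computable.succ.comp h2))
    · funext c
      rw [key, hdom, Denumerable.ofNat_encode]
end

section
/- Let A and B be NFQ groups such that B is nontrivial and A has trivial center, let G = A * B be their free product, and let a ∈ A. Then the mapping torus G_{τ_a} is commensurable with G_{id} (equivalently, with G × ℤ) if and only if a has finite order in A. -/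
/-!
Write `G = A * B`, and `ℤ[G]` for its integral group ring. The group `G` acts on `ℤ[G]` by affine
maps: `b ∈ B` by left multiplication, and `a ∈ A` by left multiplication conjugated by a
translation, so that `a` fixes `-1` instead of `0` (`affineAction`; the orbit map of `0` is the Fox
derivation killing `B` and sending `a` to `a - 1`). When `B` is infinite, `0` is the only fixed
point of `B`, since an invariant element would have infinite support. Hence an element `g` which
commutes with `B` fixes `0`. Mapping `ℤ[G]` to `ℤ[A]`, this gives that the `A`-component of `g` is
trivial (`fst_eq_one_of_commute`); if moreover `g` commutes with `A` and `A` is infinite, then `g`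
also fixes `-1`, and `g = 1` since the linear part of `g` is left multiplication by `g`
(`eq_one_of_commute`). No normal forms are needed. Nontrivial NFQ groups are infinite.

Suppose the mapping tori are commensurable, with `A` nontrivial (else `a = 1`). Since `A` and `B`
are NFQ, finite index subgroups of either torus contain `A` and `B`. A power of the generator of `ℤ` gives a nontrivial central
element in the finite index subgroup of `G_id`; let `(g, k)` be the corresponding element of
`G_τ`. It commutes with `A` and `B`, so `g` commutes with `B` and
`g (a⁻ᵏ x aᵏ) = x g` for `x ∈ A`. Projecting to `A`, where `g` becomes trivial, `aᵏ` is central in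
`A`, so `aᵏ = 1`. If `k = 0` then `g` is central, so `g = 1`, contradicting nontriviality.

Conversely, if `aⁿ = 1` with `n > 0` then `τⁿ = 1`, and the preimage of `nℤ` in `G_τ` is
isomorphic to `G_id`.
-/

open Monoid

/-- A group is NFQ ('no finite quotients') if it has no proper subgroup of finite index. -/
def NFQ (G : Type*) [Group G] : Prop :=
  ∀ H : Subgroup G, H.index ≠ 0 → H = ⊤

/-- The mapping torus `G ⋊_φ ℤ` of an automorphism `φ` of `G`: the semidirect product
in which `n : ℤ` acts on `G` by `φ ^ n`. -/
abbrev MappingTorus (G : Type*) [Group G] (φ : MulAut G) : Type _ :=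
  SemidirectProduct G (Multiplicative ℤ) (zpowersHom (MulAut G) φ)

section AffineAction

variable {A B : Type*} [Group A] [Group B]

/-- The action of a group on its integral group ring by left multiplication. -/
noncomputable def leftMulAction (G : Type*) [Group G] : G →* Equiv.Perm (MonoidAlgebra ℤ G) :=
  (MulAction.toPermHom (MonoidAlgebra ℤ G)ˣ (MonoidAlgebra ℤ G)).comp
    (MonoidAlgebra.of ℤ G).toHomUnits

/-- An element of the group ring invariant under an infinite group has infinite support unless it
vanishes. -/
theorem eq_zero_of_of_mul_eq {G H : Type*} [Group G] [Group H] [Infinite H] (f : H →* G)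
    (hf : Function.Injective f) (v : MonoidAlgebra ℤ G)
    (hv : ∀ h, MonoidAlgebra.of ℤ G (f h) * v = v) : v = 0 := by
  by_contra hne
  rw [← MonoidAlgebra.coeff_eq_zero] at hne
  obtain ⟨s, hs⟩ := Finsupp.ne_iff.mp hne
  have key : ∀ h : H, f h * s ∈ v.coeff.support := by
    intro h
    have h1 : (MonoidAlgebra.of ℤ G (f h) * v).coeff (f h * s) = v.coeff s := by
      simp [MonoidAlgebra.of_apply]
    rw [hv] at h1
    rw [Finsupp.mem_support_iff, h1]
    exact hs
  -- left translation of `s` embeds `H` into the finite support of `v`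
  refine not_injective_infinite_finite
    (fun h : H => (⟨f h * s, key h⟩ : (v.coeff.support : Finset G))) ?_
  intro x y hxy
  exact hf (mul_right_cancel (congrArg Subtype.val hxy))

/-- The action of `A * B` on its integral group ring by affine maps for which `B` acts by left
multiplication and `A` by left multiplication conjugated by a translation, with `-1` in the role
of the origin. -/
noncomputable def affineAction (A B : Type*) [Group A] [Group B] :
    Coprod A B →* Equiv.Perm (MonoidAlgebra ℤ (Coprod A B)) :=
  Coprod.lift
    ((MulAut.conj (Equiv.subRight (1 : MonoidAlgebra ℤ (Coprod A B)))).toMonoidHom.comp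
      ((leftMulAction _).comp Coprod.inl))
    ((leftMulAction _).comp Coprod.inr)

theorem affineAction_inl (x : A) (v : MonoidAlgebra ℤ (Coprod A B)) :
    affineAction A B (Coprod.inl x) v =
      MonoidAlgebra.of ℤ (Coprod A B) (Coprod.inl x) * (v + 1) - 1 := by
  simp only [affineAction, Coprod.lift_apply_inl]
  rfl

theorem affineAction_inr (y : B) (v : MonoidAlgebra ℤ (Coprod A B)) :
    affineAction A B (Coprod.inr y) v = MonoidAlgebra.of ℤ (Coprod A B) (Coprod.inr y) * v := by
  simp only [affineAction, Coprod.lift_apply_inr]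
  rfl

/-- The linear part of the action of `g` is left multiplication by `g`. -/
theorem affineAction_sub (g : Coprod A B) : ∀ v w : MonoidAlgebra ℤ (Coprod A B),
    affineAction A B g v - affineAction A B g w = MonoidAlgebra.of ℤ _ g * (v - w) := by
  induction g using Coprod.induction_on with
  | inl x => intro v w; rw [affineAction_inl, affineAction_inl]; noncomm_ring
  | inr y => intro v w; rw [affineAction_inr, affineAction_inr, mul_sub]
  | mul g h hg hh =>
    intro v w
    rw [map_mul, Equiv.Perm.mul_apply, Equiv.Perm.mul_apply, hg, hh, map_mul, mul_assoc]

/-- After projection to `ℤ[A]`, the whole group `A * B` acts through `A`, fixing `-1`. -/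
theorem mapDomain_affineAction (g : Coprod A B) : ∀ v : MonoidAlgebra ℤ (Coprod A B),
    MonoidAlgebra.mapDomainRingHom ℤ (Coprod.fst : Coprod A B →* A) (affineAction A B g v) =
      MonoidAlgebra.of ℤ A (Coprod.fst g) *
        (MonoidAlgebra.mapDomainRingHom ℤ (Coprod.fst : Coprod A B →* A) v + 1) - 1 := by
  induction g using Coprod.induction_on with
  | inl x =>
    intro v
    rw [affineAction_inl, map_sub, map_mul, map_add, map_one]
    simp [MonoidAlgebra.of_apply]
  | inr y =>
    intro v
    rw [affineAction_inr, map_mul]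
    simp [MonoidAlgebra.of_apply, ← MonoidAlgebra.one_def]
  | mul g h hg hh =>
    intro v
    rw [map_mul, Equiv.Perm.mul_apply, hg, hh, map_mul, map_mul, sub_add_cancel, mul_assoc]

theorem affineAction_zero_of_commute [Infinite B] (g : Coprod A B)
    (hg : ∀ y : B, g * Coprod.inr y = Coprod.inr y * g) : affineAction A B g 0 = 0 := by
  refine eq_zero_of_of_mul_eq (Coprod.inr : B →* Coprod A B) Coprod.inr_injective _ fun y => ?_
  rw [← affineAction_inr, ← Equiv.Perm.mul_apply, ← map_mul, ← hg, map_mul,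
    Equiv.Perm.mul_apply, affineAction_inr, mul_zero]

theorem fst_eq_one_of_commute [Infinite B] (g : Coprod A B)
    (hg : ∀ y : B, g * Coprod.inr y = Coprod.inr y * g) : Coprod.fst g = 1 := by
  have h := mapDomain_affineAction g 0
  rw [affineAction_zero_of_commute g hg, map_zero, zero_add, mul_one] at h
  apply MonoidAlgebra.of_injective (R := ℤ)
  rw [map_one]
  exact (sub_eq_zero.mp h.symm)

/-- The free product of two infinite groups has trivial center. -/
theorem eq_one_of_commute [Infinite A] [Infinite B] (g : Coprod A B)
    (hA : ∀ x : A, g * Coprod.inl x = Coprod.inl x * g)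
    (hB : ∀ y : B, g * Coprod.inr y = Coprod.inr y * g) : g = 1 := by
  have h0 := affineAction_zero_of_commute g hB
  have h1 : affineAction A B g (-1) + 1 = 0 := by
    refine eq_zero_of_of_mul_eq (Coprod.inl : A →* Coprod A B) Coprod.inl_injective _ fun x => ?_
    rw [← sub_eq_iff_eq_add, ← affineAction_inl, ← Equiv.Perm.mul_apply, ← map_mul, ← hA,
      map_mul, Equiv.Perm.mul_apply, affineAction_inl]
    simp
  have h2 := affineAction_sub g 0 (-1)
  rw [h0, eq_neg_of_add_eq_zero_left h1, sub_neg_eq_add, zero_add, mul_one] at h2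
  apply MonoidAlgebra.of_injective (R := ℤ)
  rw [map_one, h2]

end AffineAction

theorem NFQ.infinite {G : Type*} [Group G] [Nontrivial G] (h : NFQ G) : Infinite G := by
  by_contra hf
  rw [not_infinite_iff_finite] at hf
  exact bot_ne_top (h ⊥ Subgroup.index_ne_zero_of_finite)

/-- A finite index subgroup contains the image of every NFQ group. -/
theorem NFQ.map_mem {G H : Type*} [Group G] [Group H] (h : NFQ G) (f : G →* H) (K : Subgroup H)
    (hK : K.index ≠ 0) (x : G) : f x ∈ K := by
  have : K.FiniteIndex := ⟨hK⟩
  have h1 : K.comap f = ⊤ := by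
    refine h _ ?_
    rw [Subgroup.index_comap]
    exact Subgroup.FiniteIndex.index_ne_zero
  exact Subgroup.mem_comap.mp (h1 ▸ Subgroup.mem_top x)

section Torus

variable {A B : Type*} [Group A] [Group B] {a : A} {τ : MulAut (Coprod A B)}

theorem zpow_inl (hτl : ∀ x : A, τ (Coprod.inl x) = Coprod.inl (a⁻¹ * x * a)) (k : ℤ) (x : A) :
    (τ ^ k) (Coprod.inl x) = Coprod.inl ((a ^ k)⁻¹ * x * a ^ k) := by
  have hinv : ∀ x : A, τ⁻¹ (Coprod.inl x) = Coprod.inl (a * x * a⁻¹) := by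
    intro x
    rw [MulAut.inv_apply, MulEquiv.symm_apply_eq, hτl]
    group
  induction k generalizing x with
  | zero => simp
  | succ n ih =>
    rw [zpow_add_one, MulAut.mul_apply, hτl, ih]
    congr 1
    group
  | pred n ih =>
    rw [zpow_sub_one, MulAut.mul_apply, hinv, ih]
    congr 1
    group

theorem zpow_inr (hτr : ∀ y : B, τ (Coprod.inr y) = Coprod.inr y) (k : ℤ) (y : B) :
    (τ ^ k) (Coprod.inr y) = Coprod.inr y := by
  have h : τ ∈ MulAction.stabilizer (MulAut (Coprod A B)) (Coprod.inr y : Coprod A B) := hτr y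
  exact zpow_mem h k

/-- If `φ ^ n = 1` then the preimage of `n ℤ` in the mapping torus of `φ` is isomorphic to the
mapping torus of the identity. -/
theorem commensurable_of_pow_eq_one {G : Type*} [Group G] (φ : MulAut G) (n : ℕ) (hn : 0 < n)
    (h : φ ^ n = 1) : GroupCommensurable (MappingTorus G φ) (MappingTorus G 1) := by
  let ψ : MappingTorus G 1 →* MappingTorus G φ :=
    SemidirectProduct.map (MonoidHom.id G) (powMonoidHom n) (by
      intro m
      have h1 : zpowersHom (MulAut G) φ (m ^ n) = 1 := by rw [map_pow, zpowersHom_apply,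
        ← zpow_natCast, zpow_comm, zpow_natCast, h, one_zpow]
      have h2 : zpowersHom (MulAut G) 1 m = 1 := by rw [zpowersHom_apply, one_zpow]
      rw [powMonoidHom_apply, h1, h2]
      rfl)
  have hψ : Function.Injective ψ := by
    intro p q hpq
    have h1 := congrArg SemidirectProduct.left hpq
    have h2 := congrArg SemidirectProduct.right hpq
    refine SemidirectProduct.ext h1 ?_
    have h3 : p.right ^ n = q.right ^ n := h2
    exact pow_left_injective hn.ne' h3
  -- the range of `ψ` has finite index, as it contains the kernel of the reduction mod `n`
  let r : MappingTorus G φ →* Multiplicative (ZMod n) :=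
    (AddMonoidHom.toMultiplicative (Int.castAddHom (ZMod n))).comp SemidirectProduct.rightHom
  have hr : r.ker ≤ ψ.range := by
    intro p hp
    have h1 : ((p.right.toAdd : ℤ) : ZMod n) = 0 := hp
    rw [ZMod.intCast_zmod_eq_zero_iff_dvd] at h1
    obtain ⟨j, hj⟩ := h1
    refine ⟨⟨p.left, Multiplicative.ofAdd j⟩, SemidirectProduct.ext rfl ?_⟩
    refine Multiplicative.toAdd.injective (Eq.trans ?_ hj.symm)
    exact nsmul_eq_mul n j
  refine ⟨ψ.range, ⊤, ?_, by simp, ⟨(MonoidHom.ofInjective hψ).symm.trans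
    Subgroup.topEquiv.symm⟩⟩
  have : NeZero n := ⟨hn.ne'⟩
  have : Finite (Multiplicative (ZMod n)) := inferInstanceAs (Finite (ZMod n))
  have : r.ker.FiniteIndex := inferInstance
  exact (Subgroup.finiteIndex_of_le hr).index_ne_zero

end Torus

/-- Let `A` and `B` be NFQ groups with `B` nontrivial and `A` of trivial center,
`G = A * B`, `a ∈ A`, and let `τ_a` be the automorphism of `G` with `τ_a(x) = a⁻¹ x a`
for `x ∈ A` and `τ_a(y) = y` for `y ∈ B`. Then the mapping torus `G_{τ_a}` is
commensurable with `G_{id}` if and only if `a` has finite order in `A`. -/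
theorem mappingTorus_tau_commensurable_iff (A B : Type*) [Group A] [Group B] [Nontrivial B]
    (hA : NFQ A) (hB : NFQ B) (hZ : Subgroup.center A = ⊥) (a : A)
    (τ : MulAut (Coprod A B))
    (hτl : ∀ x : A, τ (Coprod.inl x) = Coprod.inl (a⁻¹ * x * a))
    (hτr : ∀ y : B, τ (Coprod.inr y) = Coprod.inr y) :
    GroupCommensurable (MappingTorus (Coprod A B) τ) (MappingTorus (Coprod A B) 1) ↔
      IsOfFinOrder a := by
  constructor
  · rintro ⟨K₁, K₂, h₁, h₂, ⟨e⟩⟩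
    cases subsingleton_or_nontrivial A with
    | inl hs => rw [Subsingleton.elim a 1]; exact IsOfFinOrder.one
    | inr hn =>
    have := hA.infinite
    have := hB.infinite
    obtain ⟨m, hm, -, hmem⟩ := Subgroup.exists_pow_mem_of_index_ne_zero h₂
      (SemidirectProduct.inr (Multiplicative.ofAdd 1) : MappingTorus (Coprod A B) 1)
    set z₂ : K₂ := ⟨_, hmem⟩ with hz₂
    have hc₂ : ∀ w : K₂, z₂ * w = w * z₂ := by
      intro w
      ext1
      refine Commute.pow_left ?_ m
      refine SemidirectProduct.ext ?_ ?_
      · simp [zpowersHom_apply]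
      · exact mul_comm _ _
    have hne₂ : z₂ ≠ 1 := by
      intro h
      have h1 : SemidirectProduct.rightHom z₂.1 = 1 := by rw [h]; rfl
      have h2 : (Multiplicative.ofAdd (1 : ℤ)) ^ m = 1 := by
        rwa [hz₂, map_pow, SemidirectProduct.rightHom_inr] at h1
      have h3 : m • (1 : ℤ) = 0 := h2
      rw [nsmul_eq_mul, mul_one] at h3
      omega
    set z₁ : K₁ := e.symm z₂ with hz₁
    have hc₁ : ∀ w : K₁, z₁ * w = w * z₁ := by
      intro w
      apply e.injective
      rw [map_mul, map_mul, hz₁, e.apply_symm_apply, hc₂]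
    have hne₁ : z₁ ≠ 1 := by simpa [hz₁] using hne₂
    obtain ⟨g, hg⟩ : ∃ g, g = z₁.1.left := ⟨_, rfl⟩
    obtain ⟨k, hk⟩ : ∃ k : ℤ, k = z₁.1.right.toAdd := ⟨_, rfl⟩
    have hcomm : ∀ x : Coprod A B, (SemidirectProduct.inl x : MappingTorus (Coprod A B) τ) ∈ K₁ →
        g * (τ ^ k) x = x * g := by
      intro x hx
      have h := congrArg (fun w : K₁ => w.1.left) (hc₁ ⟨_, hx⟩)
      simpa [zpowersHom_apply, ← hg, ← hk] using h
    have hgB : ∀ y : B, g * Coprod.inr y = Coprod.inr y * g := by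
      intro y
      have h := hcomm (Coprod.inr y) (hB.map_mem (SemidirectProduct.inl.comp Coprod.inr) K₁ h₁ y)
      rwa [zpow_inr hτr] at h
    have hgA : ∀ x : A, g * Coprod.inl ((a ^ k)⁻¹ * x * a ^ k) = Coprod.inl x * g := by
      intro x
      have h := hcomm (Coprod.inl x) (hA.map_mem (SemidirectProduct.inl.comp Coprod.inl) K₁ h₁ x)
      rwa [zpow_inl hτl] at h
    have hk0 : k ≠ 0 := by
      rintro rfl
      refine hne₁ (Subtype.ext (SemidirectProduct.ext ?_ ?_))
      · rw [← hg]
        exact eq_one_of_commute g (by simpa using hgA) hgB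
      · exact Multiplicative.toAdd.injective hk.symm
    have hak : a ^ k ∈ Subgroup.center A := by
      rw [Subgroup.mem_center_iff]
      intro x
      have h := congrArg Coprod.fst (hgA x)
      rw [map_mul Coprod.fst, map_mul Coprod.fst, fst_eq_one_of_commute g hgB,
        Coprod.fst_apply_inl, Coprod.fst_apply_inl, one_mul, mul_one, mul_assoc, inv_mul_eq_iff_eq_mul] at h
      exact h
    rw [hZ, Subgroup.mem_bot] at hak
    exact isOfFinOrder_iff_zpow_eq_one.mpr ⟨k, hk0, hak⟩
  · intro h
    obtain ⟨n, hn, han⟩ := isOfFinOrder_iff_pow_eq_one.mp h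
    refine commensurable_of_pow_eq_one τ n hn ?_
    have hhom : (τ ^ n).toMonoidHom = MonoidHom.id (Coprod A B) := by
      refine Coprod.hom_ext (MonoidHom.ext fun x => ?_) (MonoidHom.ext fun y => ?_)
      · have := zpow_inl hτl n x
        rw [zpow_natCast, zpow_natCast, han] at this
        simpa using this
      · have := zpow_inr hτr n y
        rwa [zpow_natCast] at this
    exact MulEquiv.ext fun x => DFunLike.congr_fun hhom x
end
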